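/- Let (R, m) be a d-dimensional complete Noetherian local domain of prime characteristic p with absolute integral closure R^+, and let x_1, …, x_d be a system of parameters of R. Then for every 1 ≤ n ≤ d − 1 and every y ∈ R, there exists a positive integer N_0 such that for all integers N ≥ N_0, (x_1, …, x_n, y^N)R^+ :_{R^+} x_{n+1} ⊆ (x_1, …, x_n, y^{N−N_0})R^+. -/

import Mathlib

open IsLocalRing TensorProduct
set_option synthInstance.maxHeartbeats 1000000
set_option maxHeartbeats 1000000

/-- The absolute integral closure `R⁺` of a domain `R`: the integral closure of `R`
in an algebraic closure of its fraction field. -/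
noncomputable abbrev RPlus (R : Type) [CommRing R] [IsDomain R] : Type :=
  ↥(integralClosure R (AlgebraicClosure (FractionRing R)))

/-- A system of parameters of a local ring: `d` elements generating an ideal whose
radical is the maximal ideal, where `d` is the Krull dimension. -/
def IsSOP (R : Type) [CommRing R] [IsLocalRing R] {d : ℕ} (x : Fin d → R) : Prop :=
  ringKrullDim R = d ∧ (Ideal.span (Set.range x)).radical = maximalIdeal R

section P1
open Polynomial

/-- roots hypothesis -/
def HasRoots (C : Type) [CommRing C] : Prop :=
  ∀ f : C[X], f.Monic → 0 < f.natDegree → ∃ c, f.eval c = 0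

lemma HasRoots.mem_of_root {C : Type} [CommRing C] [IsDomain C] (h : HasRoots C)
    {K : Type} [Field K] [Algebra C K] [FaithfulSMul C K] :
    ∀ (n : ℕ) (f : C[X]), f.Monic → f.natDegree = n → ∀ z : K, aeval z f = 0 → ∃ c, algebraMap C K c = z := by
  intro n
  induction n with
  | zero =>
    intro f hf hn z hz
    rw [hf.natDegree_eq_zero.mp hn] at hz
    simp at hz
  | succ n ih =>
    intro f hf hn z hz
    obtain ⟨c, hc⟩ := h f hf (by omega)
    obtain ⟨g, hg⟩ := dvd_iff_isRoot.mpr hc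
    have hgm : g.Monic := (monic_X_sub_C c).of_mul_monic_left (hg ▸ hf)
    have hd : g.natDegree = n := by
      have := (monic_X_sub_C c).natDegree_mul hgm
      rw [← hg, hn, natDegree_X_sub_C] at this
      omega
    rw [hg, map_mul, mul_eq_zero] at hz
    rcases hz with hz | hz
    · refine ⟨c, ?_⟩
      simp [sub_eq_zero] at hz
      exact hz.symm
    · exact ih g hgm hd z hz

lemma addpoly_monic {C : Type} [CommRing C] [Nontrivial C] (p : ℕ) [hp : Fact p.Prime] (M N : ℕ) 
    (b : ℕ → C) (c : C) :
    (X ^ p ^ N - ((∑ j ∈ Finset.Ico M N, Polynomial.C (b j) * X ^ p ^ j) + Polynomial.C c) : C[X]).Monic ∧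
    0 < (X ^ p ^ N - ((∑ j ∈ Finset.Ico M N, Polynomial.C (b j) * X ^ p ^ j) + Polynomial.C c) : C[X]).natDegree := by
  set q : C[X] := ((∑ j ∈ Finset.Ico M N, Polynomial.C (b j) * X ^ p ^ j) + Polynomial.C c)
  have hq : q.degree < (p ^ N : ℕ) := by
    refine (degree_add_le _ _).trans_lt (max_lt ?_ ?_)
    · refine (degree_sum_le _ _).trans_lt ?_
      rw [Finset.sup_lt_iff (by exact_mod_cast WithBot.bot_lt_coe (p^N))]
      intro j hj
      refine (degree_C_mul_X_pow_le _ _).trans_lt ?_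
      exact_mod_cast Nat.pow_lt_pow_right hp.1.one_lt (Finset.mem_Ico.mp hj).2
    · refine degree_C_le.trans_lt ?_
      exact_mod_cast pow_pos hp.1.pos N
  have hm := monic_X_pow_sub hq
  refine ⟨hm, ?_⟩
  rw [natDegree_sub_eq_left_of_natDegree_lt, natDegree_X_pow]
  · exact pow_pos hp.1.pos N
  · rw [natDegree_X_pow]
    by_cases h0 : q = 0
    · rw [h0]; simpa using pow_pos hp.1.pos N
    · exact (natDegree_lt_iff_degree_lt h0).mpr hq

/-- equational finish -/
lemma eq_finish {C : Type} [CommRing C] [IsDomain C] (h : HasRoots C) (p : ℕ) [hp : Fact p.Prime] [CharP C p]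
    {ι : Type} [DecidableEq ι] (s : Finset ι) (x : ι → C) (hx : ∀ i ∈ s, x i ≠ 0)
    (M N : ℕ) (b : ℕ → C) (u : C) (c : ι → C)
    (hu : u ^ p ^ N - ∑ j ∈ Finset.Ico M N, b j * (∏ i ∈ s, x i) ^ (p ^ N - p ^ j) * u ^ p ^ j
      = ∑ l ∈ s, x l ^ p ^ N * c l) :
    ∃ (z : C) (c' : ι → C), u = (∏ i ∈ s, x i) * z + ∑ l ∈ s, x l * c' l := by
  have hple : ∀ j ∈ Finset.Ico M N, p ^ j ≤ p ^ N := fun j hj =>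
    Nat.pow_le_pow_right hp.1.pos (Finset.mem_Ico.mp hj).2.le
  have key : ∀ l, ∃ c' : C, c' ^ p ^ N - (∑ j ∈ Finset.Ico M N, b j * (∏ i ∈ s.erase l, x i) ^ (p ^ N - p ^ j) * c' ^ p ^ j) = c l := by
    intro l
    obtain ⟨h1, h2⟩ := addpoly_monic p M N (fun j => b j * (∏ i ∈ s.erase l, x i) ^ (p ^ N - p ^ j)) (c l)
    obtain ⟨c', hc'⟩ := h _ h1 h2
    refine ⟨c', ?_⟩
    simp only [eval_sub, eval_add, eval_pow, eval_X, eval_finsetSum, eval_mul, eval_C] at hc'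
    linear_combination hc'
  choose c' hc' using key
  set π := ∏ i ∈ s, x i with hπ
  have hπ0 : π ≠ 0 := Finset.prod_ne_zero_iff.mpr hx
  -- additive operator
  let P : C → C := fun Z => Z ^ p ^ N - ∑ j ∈ Finset.Ico M N, b j * π ^ (p ^ N - p ^ j) * Z ^ p ^ j
  have hPadd : ∀ a b, P (a - b) = P a - P b := by
    intro a b'
    simp only [P, sub_pow_char_pow, mul_sub, Finset.sum_sub_distrib]
    ring
  have hP0 : P 0 = 0 := by
    have := hPadd 0 0
    simpa using this
  have hPadd' : ∀ a b, P (a + b) = P a + P b := by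
    intro a b
    have h1 := hPadd (a + b) b
    rw [add_sub_cancel_right] at h1
    rw [h1]; ring
  let PH : C →+ C := ⟨⟨P, hP0⟩, hPadd'⟩
  have hPl : ∀ l ∈ s, P (x l * c' l) = x l ^ p ^ N * c l := by
    intro l hl
    rw [← hc' l]
    simp only [P, mul_sub, Finset.mul_sum, mul_pow]
    congr 1
    refine Finset.sum_congr rfl fun j hj => ?_
    rw [hπ, ← Finset.mul_prod_erase s x hl, mul_pow]
    have : x l ^ p ^ N = x l ^ (p ^ N - p ^ j) * x l ^ p ^ j := by
      rw [← pow_add, Nat.sub_add_cancel (hple j hj)]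
    rw [this]; ring
  have hPu : P (u - ∑ l ∈ s, x l * c' l) = 0 := by
    rw [hPadd]
    have : P (∑ l ∈ s, x l * c' l) = ∑ l ∈ s, P (x l * c' l) := map_sum PH _ _
    rw [this, Finset.sum_congr rfl hPl, ← hu]
    exact sub_self _
  set w := u - ∑ l ∈ s, x l * c' l with hw
  obtain ⟨K, _, _, _⟩ : ∃ (K : Type) (_ : Field K) (_ : Algebra C K), FaithfulSMul C K := ⟨FractionRing C, inferInstance, inferInstance, inferInstance⟩
  have hπK : algebraMap C K π ≠ 0 := by
    rwa [Ne, FaithfulSMul.algebraMap_eq_zero_iff]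
  obtain ⟨h1, h2⟩ := addpoly_monic p M N b 0
  obtain ⟨z, hz⟩ := h.mem_of_root (K := K) _ _ h1 rfl (algebraMap C K w / algebraMap C K π) (by
    simp only [map_sub, map_pow, aeval_X, map_sum, map_mul, aeval_C, map_zero, add_zero]
    have h3 : algebraMap C K (P w) = 0 := by rw [hPu, map_zero]
    simp only [P, map_sub, map_pow, map_sum, map_mul] at h3
    have h4 : (algebraMap C K π) ^ p ^ N ≠ 0 := pow_ne_zero _ hπK
    have h5 : (algebraMap C K π) ^ p ^ N * ((algebraMap C K w / algebraMap C K π) ^ p ^ N -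
      ∑ j ∈ Finset.Ico M N, algebraMap C K (b j) * (algebraMap C K w / algebraMap C K π) ^ p ^ j) = 0 := by
      rw [← h3, mul_sub, Finset.mul_sum]
      congr 1
      · rw [div_pow]; field_simp
      · refine Finset.sum_congr rfl fun j hj => ?_
        have : (algebraMap C K π) ^ p ^ N = (algebraMap C K π) ^ (p ^ N - p ^ j) * (algebraMap C K π) ^ p ^ j := by
          rw [← pow_add, Nat.sub_add_cancel (hple j hj)]
        rw [this, div_pow]; field_simp
    exact (mul_eq_zero.mp h5).resolve_left h4)
  refine ⟨z, c', ?_⟩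
  have h6 : algebraMap C K (π * z) = algebraMap C K w := by
    rw [map_mul, hz]; field_simp
  have := FaithfulSMul.algebraMap_injective C K h6
  rw [this, hw]; ring

end P1

section InS
variable {ι B M N : Type} [CommRing B] [AddCommGroup M] [Module B M] [AddCommGroup N] [Module B N]

/-- membership in a finitely generated multiple -/
def InS (s : Finset ι) (a : ι → B) (m : M) : Prop := ∃ c : ι → M, m = ∑ l ∈ s, a l • c l

lemma InS.zero (s : Finset ι) (a : ι → B) : InS s a (0 : M) := ⟨0, by simp⟩

lemma InS.add {s : Finset ι} {a : ι → B} {m m' : M} (h : InS s a m) (h' : InS s a m') : InS s a (m + m') := by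
  obtain ⟨c, rfl⟩ := h
  obtain ⟨c', rfl⟩ := h'
  exact ⟨c + c', by simp [Finset.sum_add_distrib]⟩

lemma InS.smul {s : Finset ι} {a : ι → B} {m : M} (r : B) (h : InS s a m) : InS s a (r • m) := by
  obtain ⟨c, rfl⟩ := h
  exact ⟨fun l => r • c l, by simp [Finset.smul_sum, smul_comm r]⟩

lemma InS.neg {s : Finset ι} {a : ι → B} {m : M} (h : InS s a m) : InS s a (-m) := by
  simpa using h.smul (-1 : B)

lemma InS.sub {s : Finset ι} {a : ι → B} {m m' : M} (h : InS s a m) (h' : InS s a m') : InS s a (m - m') := by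
  rw [sub_eq_add_neg]; exact h.add h'.neg

lemma InS.map {s : Finset ι} {a : ι → B} {m : M} (f : M →ₗ[B] N) (h : InS s a m) : InS s a (f m) := by
  obtain ⟨c, rfl⟩ := h
  exact ⟨fun l => f (c l), by simp⟩

lemma InS.single [DecidableEq ι] {s : Finset ι} {a : ι → B} {l : ι} (hl : l ∈ s) (m : M) : InS s a (a l • m) :=
  ⟨Pi.single l m, by
    rw [Finset.sum_eq_single l]
    · simp
    · intro b _ hb; simp [hb]
    · exact fun h => absurd hl h⟩

lemma InS.of_forall [DecidableEq ι] {s s' : Finset ι} {a a' : ι → B} {m : M} (h : InS s a m)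
    (H : ∀ l ∈ s, ∀ c : M, InS s' a' (a l • c)) : InS s' a' m := by
  obtain ⟨c, rfl⟩ := h
  refine Finset.sum_induction _ (InS s' a') (fun _ _ => InS.add) (InS.zero _ _) fun l hl => H l hl _

lemma InS.mono [DecidableEq ι] {s s' : Finset ι} {a : ι → B} {m : M} (h : InS s a m) (hs : s ⊆ s') : InS s' a m :=
  h.of_forall fun _ hl c => InS.single (hs hl) c

lemma InS.pow_mono [DecidableEq ι] {s : Finset ι} {x : ι → B} {t t' : ι → ℕ} {m : M} (h : InS s (fun l => x l ^ t l) m)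
    (ht : ∀ l ∈ s, t' l ≤ t l) : InS s (fun l => x l ^ t' l) m :=
  h.of_forall fun l hl c => by
    show InS s (fun l => x l ^ t' l) (x l ^ t l • c)
    rw [← Nat.sub_add_cancel (ht l hl), pow_add, mul_comm, mul_smul]
    exact InS.single (a := fun l => x l ^ t' l) hl _

lemma InS.pi {k : ℕ} {s : Finset ι} {a : ι → B} {m : Fin k → B} (h : ∀ j, InS s a (m j)) : InS s a m := by
  choose c hc using h
  refine ⟨fun l j => c j l, ?_⟩
  ext j
  simp [hc j]

lemma InS.apply {k : ℕ} {s : Finset ι} {a : ι → B} {m : Fin k → B} (h : InS s a m) (j : Fin k) : InS s a (m j) :=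
  h.map (LinearMap.proj j)

end InS

section tracking
variable {ι B C : Type} [DecidableEq ι] [CommRing B] [CommRing C] [Algebra B C]

/-- factorization through finite free modules up to a power -/
def FactorHyp (B C : Type) [CommRing B] [CommRing C] [Algebra B C] (a : B) : Prop :=
  ∀ R : Submodule B C, R.FG → ∃ (e k : ℕ) (φ : R →ₗ[B] (Fin k → B)) (ψ : (Fin k → B) →ₗ[B] C),
    ∀ r, ψ (φ r) = a ^ e • (r : C)

/-- Exponent vector -/
def tau (e : ι → ℕ) (t : ℕ) (s' : Finset ι) : ι → ℕ := fun l => if l ∈ s' then e l else t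

lemma tracking (s : Finset ι) (x : ι → B) (y : B)
    (hB1 : ∀ (b : ℕ) (t : ι → ℕ) (m : B), InS s (fun l => x l ^ t l) (y ^ b • m) → InS s (fun l => x l ^ t l) m)
    (hB2 : ∀ i ∈ s, ∀ (b : ℕ) (t : ι → ℕ) (m : B), InS (s.erase i) (fun l => x l ^ t l) (x i ^ b • m) →
      InS (s.erase i) (fun l => x l ^ t l) m)
    (hC : ∀ i ∈ s, ∀ (b : ℕ) (t : ι → ℕ) (m : C), InS (s.erase i) (fun l => x l ^ t l) (x i ^ b • m) →
      InS (s.erase i) (fun l => x l ^ t l) m)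
    (hFy : FactorHyp B C y) (hFx : ∀ i ∈ s, FactorHyp B C (x i)) (R : Submodule B C) (hR : R.FG) 
    (s' : Finset ι) (hs' : s' ⊆ s) :
    ∃ (e : ι → ℕ) (E : ℕ) (R' : Submodule B C) (b : ℕ), R'.FG ∧ (∀ l ∈ s', e l ≤ E) ∧ ∀ t : ℕ, E ≤ t → ∀ v ∈ R, ∀ b0 : ℕ,
      (∃ r : ι → C, (∀ l, r l ∈ R) ∧ y ^ b0 • v = ∑ l ∈ s, x l ^ t • r l) →
      ∃ v' ∈ R', (∃ r : ι → C, (∀ l, r l ∈ R') ∧ y ^ b • v' = ∑ l ∈ s, x l ^ (tau e t s' l) • r l) ∧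
        InS s (fun l => x l ^ t) (v - (∏ i ∈ s', x i ^ (t - e i)) • v') := by
  induction s' using Finset.induction_on with
  | empty =>
    obtain ⟨β, k, φ, ψ, hψ⟩ := hFy R hR
    refine ⟨0, 0, R ⊔ LinearMap.range ψ, β, hR.sup (by rw [LinearMap.range_eq_map]; exact Module.Finite.fg_top.map ψ), by simp, ?_⟩
    rintro t - v hv b0 ⟨r, hr, hvr⟩
    refine ⟨v, Submodule.mem_sup_left hv, ?_, by simpa using InS.zero _ _⟩
    have h1 : InS s (fun l => x l ^ t) (y ^ b0 • φ ⟨v, hv⟩) := by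
      refine ⟨fun l => φ ⟨r l, hr l⟩, ?_⟩
      rw [← map_smul, ← Finset.sum_congr rfl (fun l _ => map_smul φ _ _), ← map_sum]
      congr 1
      ext
      simpa using hvr
    have h2 : InS s (fun l => x l ^ t) (φ ⟨v, hv⟩) := InS.pi fun j => hB1 b0 (fun _ => t) _ (h1.apply j)
    obtain ⟨d, hd⟩ := h2
    refine ⟨fun l => ψ (d l), fun l => Submodule.mem_sup_right ⟨_, rfl⟩, ?_⟩
    rw [← hψ ⟨v, hv⟩, hd]
    simp [tau]
  | insert i s' hi ih =>
    have his : i ∈ s := hs' (Finset.mem_insert_self _ _)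
    obtain ⟨e, E, R', b, hR', heE, H⟩ := ih (fun l hl => hs' (Finset.mem_insert_of_mem hl))
    obtain ⟨ε, k, φ, ψ, hψ⟩ := hFx i his R' hR'
    have hR2 : (R' ⊔ LinearMap.range ψ).FG := hR'.sup (by rw [LinearMap.range_eq_map]; exact Module.Finite.fg_top.map ψ)
    obtain ⟨β, k', φ', ψ', hψ'⟩ := hFy _ hR2
    refine ⟨Function.update e i ε, max E ε, R' ⊔ LinearMap.range ψ ⊔ LinearMap.range ψ', β + b,
      hR2.sup (by rw [LinearMap.range_eq_map]; exact Module.Finite.fg_top.map ψ'), ?_, ?_⟩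
    · intro l hl
      by_cases h : l = i
      · subst h; simp
      · rw [Function.update_of_ne h]
        exact (heE l (Finset.mem_of_mem_insert_of_ne hl h)).trans (le_max_left _ _)
    · intro t ht v hv b0 hvr
      obtain ⟨v', hv', ⟨r, hr, hyr⟩, hdiff⟩ := H t ((le_max_left _ _).trans ht) v hv b0 hvr
      have hεt : ε ≤ t := (le_max_right _ _).trans ht
      set τ := tau e t s' with hτ
      have hτi : τ i = t := by simp [hτ, tau, hi]
      -- first factorization
      have h1 : InS s (fun l => x l ^ τ l) (y ^ b • φ ⟨v', hv'⟩) := by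
        refine ⟨fun l => φ ⟨r l, hr l⟩, ?_⟩
        rw [← map_smul, ← Finset.sum_congr rfl (fun l _ => map_smul φ _ _), ← map_sum]
        congr 1
        ext
        simpa using hyr
      obtain ⟨d, hd⟩ : InS s (fun l => x l ^ τ l) (φ ⟨v', hv'⟩) := InS.pi fun j => hB1 b τ _ (h1.apply j)
      have hxv : x i ^ ε • v' = ∑ l ∈ s, x l ^ τ l • ψ (d l) := by
        rw [← hψ ⟨v', hv'⟩, hd]; simp
      -- syzygy
      have hw : ∀ l, x i ^ ε • r l - y ^ b • ψ (d l) ∈ R' ⊔ LinearMap.range ψ := fun l =>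
        Submodule.sub_mem _ (Submodule.smul_mem _ _ (Submodule.mem_sup_left (hr l)))
          (Submodule.smul_mem _ _ (Submodule.mem_sup_right ⟨_, rfl⟩))
      have hsyz : ∑ l ∈ s, x l ^ τ l • (x i ^ ε • r l - y ^ b • ψ (d l)) = 0 := by
        simp only [smul_sub, Finset.sum_sub_distrib, smul_comm _ (x i ^ ε), smul_comm _ (y ^ b), ← Finset.smul_sum]
        rw [← hxv, ← hyr, smul_comm, sub_self]
      set W : ι → ↥(R' ⊔ LinearMap.range ψ) := fun l => ⟨_, hw l⟩ with hW
      have hsyz2 : ∑ l ∈ s, x l ^ τ l • φ' (W l) = 0 := by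
        rw [← Finset.sum_congr rfl (fun l _ => map_smul φ' _ _), ← map_sum]
        convert map_zero φ'
        ext
        simpa [hW] using hsyz
      rw [← Finset.add_sum_erase _ _ his] at hsyz2
      have h3 : InS (s.erase i) (fun l => x l ^ τ l) (x i ^ τ i • (-φ' (W i))) :=
        ⟨fun l => φ' (W l), by rw [smul_neg]; exact (eq_neg_of_add_eq_zero_right hsyz2).symm⟩
      obtain ⟨d', hd'⟩ : InS (s.erase i) (fun l => x l ^ τ l) (-φ' (W i)) :=
        InS.pi fun j => hB2 i his _ τ _ (h3.apply j)
      have h4 : y ^ β • (y ^ b • ψ (d i) - x i ^ ε • r i) = ∑ l ∈ s.erase i, x l ^ τ l • ψ' (d' l) := by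
        have h5 := congrArg ψ' hd'
        rw [map_neg, hψ', map_sum] at h5
        simp only [map_smul] at h5
        rw [← h5, hW, ← smul_neg]
        simp
      refine ⟨ψ (d i), Submodule.mem_sup_left (Submodule.mem_sup_right ⟨_, rfl⟩), ?_, ?_⟩
      · refine ⟨fun l => if l = i then y ^ β • r i else ψ' (d' l), ?_, ?_⟩
        · intro l
          dsimp only
          split_ifs
          · exact Submodule.smul_mem _ _ (Submodule.mem_sup_left (Submodule.mem_sup_left (hr i)))
          · exact Submodule.mem_sup_right ⟨_, rfl⟩
        · rw [← Finset.add_sum_erase _ _ his]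
          dsimp only
          rw [if_pos rfl]
          have h6 : ∑ l ∈ s.erase i, x l ^ tau (Function.update e i ε) t (insert i s') l • (if l = i then y ^ β • r i else ψ' (d' l))
            = ∑ l ∈ s.erase i, x l ^ τ l • ψ' (d' l) := by
            refine Finset.sum_congr rfl fun l hl => ?_
            have hne := Finset.ne_of_mem_erase hl
            rw [if_neg hne]
            simp [tau, hτ, hne]
          rw [h6, ← h4]
          have h7 : tau (Function.update e i ε) t (insert i s') i = ε := by simp [tau]
          rw [h7, pow_add, mul_smul, smul_sub, smul_comm (x i ^ ε)]
          abel
      · -- difference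
        have h8 : InS (s.erase i) (fun l => x l ^ τ l) (x i ^ ε • (v' - x i ^ (t - ε) • ψ (d i))) := by
          refine ⟨fun l => ψ (d l), ?_⟩
          rw [smul_sub, hxv, ← Finset.add_sum_erase _ _ his, smul_smul, ← pow_add, hτi, Nat.add_sub_cancel' hεt]
          abel
        have h9 := hC i his ε τ _ h8
        have h10 : ∏ j ∈ insert i s', x j ^ (t - Function.update e i ε j) = x i ^ (t - ε) * ∏ j ∈ s', x j ^ (t - e j) := by
          rw [Finset.prod_insert hi]
          congr 1
          · simp
          · refine Finset.prod_congr rfl fun j hj => ?_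
            rw [Function.update_of_ne (by rintro rfl; exact hi hj)]
        have h11 : v - (∏ j ∈ insert i s', x j ^ (t - Function.update e i ε j)) • ψ (d i) =
          (v - (∏ j ∈ s', x j ^ (t - e j)) • v') + (∏ j ∈ s', x j ^ (t - e j)) • (v' - x i ^ (t - ε) • ψ (d i)) := by
          rw [h10, smul_sub, smul_smul, mul_comm]
          abel
        rw [h11]
        refine hdiff.add ?_
        obtain ⟨c, hc⟩ := h9
        rw [hc, Finset.smul_sum]
        refine Finset.sum_induction _ (InS s _) (fun _ _ => InS.add) (InS.zero _ _) fun l hl => ?_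
        have hls := Finset.mem_of_mem_erase hl
        by_cases hl' : l ∈ s'
        · rw [← Finset.mul_prod_erase _ _ hl', smul_smul]
          have : x l ^ (t - e l) * (∏ j ∈ s'.erase l, x j ^ (t - e j)) * x l ^ τ l = x l ^ t * (∏ j ∈ s'.erase l, x j ^ (t - e j)) := by
            have h12 : τ l = e l := by simp [hτ, tau, hl']
            have h13 : x l ^ t = x l ^ (t - e l) * x l ^ (e l) := by
              rw [← pow_add, Nat.sub_add_cancel]
              exact (heE l hl').trans ((le_max_left _ _).trans ht)
            rw [h12, h13]; ring
          dsimp only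
          rw [this, mul_smul]
          exact InS.single (a := fun l => x l ^ t) hls _
        · have h12 : τ l = t := by simp [hτ, tau, hl']
          dsimp only
          rw [h12, smul_comm]
          exact InS.single (a := fun l => x l ^ t) hls _

end tracking

section core
variable {ι B C : Type} [DecidableEq ι] [CommRing B] [CommRing C] [Algebra B C]

lemma noeth_rel [IsNoetherianRing B] (R' : Submodule B C) (hR : R'.FG) (v : ℕ → C) (M : ℕ) (hv : ∀ j, M ≤ j → v j ∈ R') :
    ∃ N, M ≤ N ∧ ∃ b : ℕ → B, v N = ∑ j ∈ Finset.Ico M N, b j • v j := by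
  classical
  haveI : IsNoetherian B R' := isNoetherian_of_fg_of_noetherian _ hR
  let w : ℕ → R' := fun j => if h : M ≤ j then ⟨v j, hv j h⟩ else 0
  let f : ℕ →o Submodule B R' := ⟨fun n => Submodule.span B (w '' (Finset.Ico M n)), fun a b hab =>
    Submodule.span_mono (Set.image_mono (by simpa using Set.Ico_subset_Ico_right hab))⟩
  obtain ⟨n, hn⟩ := monotone_stabilizes_iff_noetherian.mpr this f
  let N := max M n
  have h1 : w N ∈ f N := by
    have h2 : f N = f (N + 1) := by
      rw [← hn N (le_max_right _ _), ← hn (N + 1) (by have := le_max_right M n; omega)]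
    rw [h2]
    refine Submodule.subset_span ⟨N, ?_, rfl⟩
    simp [N]
  obtain ⟨b, hb⟩ := (Submodule.mem_span_image_finset_iff_exists_fun B).mp h1
  refine ⟨N, le_max_left _ _, fun j => if h : j ∈ Finset.Ico M N then b ⟨j, h⟩ else 0, ?_⟩
  have h3 := congrArg (Subtype.val) hb
  simp only [AddSubmonoidClass.coe_finsetSum, SetLike.val_smul] at h3
  have h4 : ∀ j, M ≤ j → (w j : C) = v j := fun j hj => by simp [w, hj]
  rw [← h4 N (le_max_left _ _), ← h3]
  rw [← Finset.sum_attach (Finset.Ico M N)]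
  refine Finset.sum_congr rfl fun j hj => ?_
  dsimp only
  rw [h4 j (Finset.mem_Ico.mp j.2).1, dif_pos j.2]

theorem core_lemma [IsNoetherianRing B] [IsDomain C] [Algebra.IsIntegral B C] (hroots : HasRoots C) (p : ℕ) [hp : Fact p.Prime] [CharP C p]
    (s : Finset ι) (hs : s.Nonempty) (x : ι → B) (y : B)
    (hx0 : ∀ i ∈ s, algebraMap B C (x i) ≠ 0)
    (hB1 : ∀ (b : ℕ) (t : ι → ℕ) (m : B), InS s (fun l => x l ^ t l) (y ^ b • m) → InS s (fun l => x l ^ t l) m)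
    (hB2 : ∀ i ∈ s, ∀ (b : ℕ) (t : ι → ℕ) (m : B), InS (s.erase i) (fun l => x l ^ t l) (x i ^ b • m) →
      InS (s.erase i) (fun l => x l ^ t l) m)
    (hC : ∀ i ∈ s, ∀ (b : ℕ) (t : ι → ℕ) (m : C), InS (s.erase i) (fun l => x l ^ t l) (x i ^ b • m) →
      InS (s.erase i) (fun l => x l ^ t l) m)
    (hFy : FactorHyp B C y) (hFx : ∀ i ∈ s, FactorHyp B C (x i)) (u : C)
    (hu : InS s x (y • u)) : InS s x u := by
  classical
  obtain ⟨c0, hc0⟩ := hu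
  let c : ι → C := fun l => if l ∈ s then c0 l else 0
  have hc : y • u = ∑ l ∈ s, x l • c l := by
    rw [hc0]; exact Finset.sum_congr rfl fun l hl => by simp [c, hl]
  let gens : Finset C := insert u (insert 0 (s.image c0))
  let R : Subalgebra B C := Algebra.adjoin B (gens : Set C)
  have hR : (Subalgebra.toSubmodule R).FG := fg_adjoin_of_finite gens.finite_toSet
    (fun z _ => Algebra.IsIntegral.isIntegral z)
  have huR : u ∈ R := Algebra.subset_adjoin (by simp [gens])
  have hcR : ∀ l, c l ∈ R := fun l => Algebra.subset_adjoin (by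
    by_cases h : l ∈ s
    · simp only [c, h, if_true]; simp only [gens, Finset.coe_insert, Finset.coe_image]; right; right; exact ⟨l, h, rfl⟩
    · simp [c, h, gens])
  obtain ⟨e, E, R', b, hR', heE, H⟩ := tracking s x y hB1 hB2 hC hFy hFx _ hR s subset_rfl
  set π : B := ∏ i ∈ s, x i with hπ
  have hfrob : ∀ q j : ℕ, q = p ^ j → y ^ q • u ^ q = ∑ l ∈ s, x l ^ q • (c l ^ q) := by
    rintro q j rfl
    have := congrArg (· ^ p ^ j) hc
    simp only [sum_pow_char_pow, smul_pow] at this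
    exact this
  have key : ∀ j, E ≤ p ^ j → ∃ v ∈ R', InS s (fun l => x l ^ p ^ j) (u ^ p ^ j - π ^ (p ^ j - E) • v) := by
    intro j hj
    obtain ⟨v', hv', -, hd⟩ := H (p ^ j) hj (u ^ p ^ j) (R.pow_mem huR _) (p ^ j)
      ⟨fun l => c l ^ p ^ j, fun l => R.pow_mem (hcR l) _, hfrob _ j rfl⟩
    refine ⟨(∏ i ∈ s, x i ^ (E - e i)) • v', R'.smul_mem _ hv', ?_⟩
    convert hd using 2
    rw [smul_smul, hπ, ← Finset.prod_pow, ← Finset.prod_mul_distrib]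
    congr 1
    refine Finset.prod_congr rfl fun i hi => ?_
    rw [← pow_add]
    congr 1
    have := heE i hi
    omega
  have key2 : ∀ j, ∃ v, E ≤ p ^ j → v ∈ R' ∧ InS s (fun l => x l ^ p ^ j) (u ^ p ^ j - π ^ (p ^ j - E) • v) := by
    intro j
    by_cases hj : E ≤ p ^ j
    · obtain ⟨v, h⟩ := key j hj
      exact ⟨v, fun _ => h⟩
    · exact ⟨0, fun h => absurd h hj⟩
  choose v hv using key2
  have hM : ∀ j, E ≤ j → E ≤ p ^ j := fun j hj => hj.trans (Nat.lt_pow_self hp.1.one_lt).le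
  obtain ⟨N, hEN, b, hb⟩ := noeth_rel R' hR' v E (fun j hj => (hv j (hM j hj)).1)
  have hcc : ∀ j, ∃ cc : ι → C, E ≤ j → u ^ p ^ j - π ^ (p ^ j - E) • v j = ∑ l ∈ s, x l ^ p ^ j • cc l := by
    intro j
    by_cases hj : E ≤ j
    · obtain ⟨cc, h⟩ := (hv j (hM j hj)).2
      exact ⟨cc, fun _ => h⟩
    · exact ⟨0, fun h => absurd h hj⟩
  choose cc hcc using hcc
  have hple : ∀ j ∈ Finset.Ico E N, p ^ j ≤ p ^ N := fun j hj =>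
    Nat.pow_le_pow_right hp.1.pos (Finset.mem_Ico.mp hj).2.le
  -- the equation
  have heq : u ^ p ^ N - ∑ j ∈ Finset.Ico E N, (b j * π ^ (p ^ N - p ^ j)) • u ^ p ^ j
      = ∑ l ∈ s, x l ^ p ^ N • (cc N l - ∑ j ∈ Finset.Ico E N, (b j * (∏ i ∈ s.erase l, x i) ^ (p ^ N - p ^ j)) • cc j l) := by
    have e1 : u ^ p ^ N = π ^ (p ^ N - E) • v N + ∑ l ∈ s, x l ^ p ^ N • cc N l := by
      rw [← hcc N hEN]; abel
    have e2 : π ^ (p ^ N - E) • v N = ∑ j ∈ Finset.Ico E N, (b j * π ^ (p ^ N - p ^ j)) • (u ^ p ^ j - ∑ l ∈ s, x l ^ p ^ j • cc j l) := by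
      rw [hb, Finset.smul_sum]
      refine Finset.sum_congr rfl fun j hj => ?_
      rw [← hcc j (Finset.mem_Ico.mp hj).1, sub_sub_cancel, smul_smul, smul_smul]
      congr 1
      have h5 : p ^ N - E = (p ^ N - p ^ j) + (p ^ j - E) := by
        have := hple j hj
        have := hM j (Finset.mem_Ico.mp hj).1
        omega
      rw [h5, pow_add]; ring
    rw [e1, e2]
    simp only [smul_sub, Finset.sum_sub_distrib, Finset.smul_sum]
    rw [Finset.sum_comm (s := s)]
    have e3 : ∀ j ∈ Finset.Ico E N, ∀ l ∈ s, (b j * π ^ (p ^ N - p ^ j)) • x l ^ p ^ j • cc j l = 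
        x l ^ p ^ N • (b j * (∏ i ∈ s.erase l, x i) ^ (p ^ N - p ^ j)) • cc j l := by
      intro j hj l hl
      rw [smul_smul, smul_smul]
      congr 1
      have h6 : x l ^ p ^ N = x l ^ (p ^ N - p ^ j) * x l ^ p ^ j := by
        rw [← pow_add, Nat.sub_add_cancel (hple j hj)]
      rw [h6, hπ, ← Finset.mul_prod_erase s x hl, mul_pow]
      ring
    rw [Finset.sum_congr rfl fun j hj => Finset.sum_congr rfl (e3 j hj)]
    abel
  obtain ⟨z, c', hz⟩ := eq_finish hroots p s (fun i => algebraMap B C (x i)) hx0 E N (fun j => algebraMap B C (b j)) u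
    (fun l => cc N l - ∑ j ∈ Finset.Ico E N, (b j * (∏ i ∈ s.erase l, x i) ^ (p ^ N - p ^ j)) • cc j l) (by
      simp only [Algebra.smul_def, map_mul, map_pow] at heq ⊢
      rw [← heq, hπ, map_prod])
  rw [hz]
  refine InS.add ?_ ⟨c', by simp [Algebra.smul_def]⟩
  obtain ⟨i, hi⟩ := hs
  rw [← Finset.mul_prod_erase _ _ hi, mul_assoc, ← Algebra.smul_def]
  exact InS.single hi _

end core

section SRsec
variable {ι B M : Type} [DecidableEq ι] [CommRing B] [AddCommGroup M] [Module B M]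

/-- strongly regular family -/
def SR (M : Type) [AddCommGroup M] [Module B M] (x : ι → B) : Prop :=
  ∀ (s : Finset ι) (i : ι), i ∉ s → ∀ (t : ι → ℕ) (m : M), InS s (fun l => x l ^ t l) (x i • m) → InS s (fun l => x l ^ t l) m

lemma SR.pow {x : ι → B} (h : SR M x) (s : Finset ι) (i : ι) (hi : i ∉ s) (b : ℕ) (t : ι → ℕ) (m : M)
    (hm : InS s (fun l => x l ^ t l) (x i ^ b • m)) : InS s (fun l => x l ^ t l) m := by
  induction b with
  | zero => simpa using hm
  | succ b ih => 
    apply ih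
    apply h s i hi t
    rwa [smul_smul, ← pow_succ']

/-- the ideal of elements -/
def InS.ideal (s : Finset ι) (a : ι → B) : Ideal B where
  carrier := {m | InS s a m}
  add_mem' := InS.add
  zero_mem' := InS.zero _ _
  smul_mem' := fun r _ h => InS.smul r h

lemma InS_iff_mem_span (s : Finset ι) (a : ι → B) (m : B) : InS s a m ↔ m ∈ Ideal.span (a '' s) := by
  constructor
  · rintro ⟨c, rfl⟩
    refine Ideal.sum_mem _ fun l hl => ?_
    rw [smul_eq_mul]
    exact Ideal.mul_mem_right _ _ (Ideal.subset_span ⟨l, hl, rfl⟩)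
  · intro h
    have : Ideal.span (a '' s) ≤ InS.ideal s a := by
      rw [Ideal.span_le]
      rintro _ ⟨l, hl, rfl⟩
      have := InS.single (M := B) (a := a) hl 1
      rwa [smul_eq_mul, mul_one] at this
    exact this h

lemma krull_closed [IsNoetherianRing B] [IsLocalRing B] (I : Ideal B) (m : B)
    (h : ∀ N : ℕ, m ∈ I ⊔ maximalIdeal B ^ N) : m ∈ I := by
  have hH : (⨅ i : ℕ, maximalIdeal B ^ i • ⊤ : Submodule B (B ⧸ I)) = ⊥ :=
    Ideal.iInf_pow_smul_eq_bot_of_isLocalRing _ (Ideal.IsPrime.ne_top inferInstance)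
  rw [← Ideal.Quotient.eq_zero_iff_mem, ← Submodule.mem_bot B, ← hH, Submodule.mem_iInf]
  intro N
  obtain ⟨a, ha, b, hb, rfl⟩ := Submodule.mem_sup.mp (h N)
  rw [map_add, Ideal.Quotient.eq_zero_iff_mem.mpr ha, zero_add]
  have : Ideal.Quotient.mk I b = b • (1 : B ⧸ I) := by rw [Algebra.smul_def, mul_one]; rfl
  rw [this]
  exact Submodule.smul_mem_smul hb trivial

lemma SR_ext_a1 [Fintype ι] {x : ι → B} (hx : SR B x) (y : B)
    (hy : ∀ m : B, InS Finset.univ x (y • m) → InS Finset.univ x m) :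
    ∀ (n : ℕ) (t : ι → ℕ), ∑ i, t i = n → ∀ m : B, InS Finset.univ (fun l => x l ^ t l) (y • m) → InS Finset.univ (fun l => x l ^ t l) m := by
  intro n
  induction n using Nat.strong_induction_on with
  | _ n ih =>
  intro t ht m hm
  by_cases h0 : ∃ i, t i = 0
  · obtain ⟨i, hi⟩ := h0
    have := InS.single (a := fun l => x l ^ t l) (Finset.mem_univ i) m
    simpa [hi] using this
  by_cases h2 : ∃ i, 2 ≤ t i
  · obtain ⟨i, hi⟩ := h2
    let t1 := Function.update t i (t i - 1)
    let t2 := Function.update t i 1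
    have ht1 : ∀ l, l ≠ i → t1 l = t l := fun l hl => Function.update_of_ne hl _ _
    have ht2 : ∀ l, l ≠ i → t2 l = t l := fun l hl => Function.update_of_ne hl _ _
    have ht1i : t1 i = t i - 1 := Function.update_self _ _ _
    have ht2i : t2 i = 1 := Function.update_self _ _ _
    have hlt : ∀ t' : ι → ℕ, (∀ l, l ≠ i → t' l = t l) → t' i < t i → ∑ l, t' l < n := by
      intro t' h1 h2
      rw [← ht]
      refine Finset.sum_lt_sum (fun l _ => ?_) ⟨i, Finset.mem_univ _, h2⟩
      by_cases hl : l = i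
      · subst hl; exact h2.le
      · exact (h1 l hl).le
    have hm1 : InS Finset.univ (fun l => x l ^ t1 l) m := by
      refine ih _ (hlt t1 ht1 (by omega)) t1 rfl m (hm.pow_mono fun l _ => ?_)
      by_cases hl : l = i
      · subst hl; omega
      · exact (ht1 l hl).le
    obtain ⟨c', hc'⟩ := hm1
    obtain ⟨c, hc⟩ := hm
    have hs : InS (Finset.univ.erase i) (fun l => x l ^ t l) (x i ^ (t i - 1) • (y • c' i - x i • c i)) := by
      refine ⟨fun l => c l - y • c' l, ?_⟩
      have e1 : y • m = x i ^ (t i - 1) • y • c' i + ∑ l ∈ Finset.univ.erase i, x l ^ t l • y • c' l := by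
        rw [hc', ← Finset.add_sum_erase _ _ (Finset.mem_univ i), smul_add, Finset.smul_sum]
        dsimp only
        rw [ht1i]
        congr 1
        · exact smul_comm _ _ _
        · refine Finset.sum_congr rfl fun l hl => ?_
          rw [ht1 l (Finset.ne_of_mem_erase hl)]
          exact smul_comm _ _ _
      have e2 : y • m = x i ^ (t i - 1) • x i • c i + ∑ l ∈ Finset.univ.erase i, x l ^ t l • c l := by
        rw [hc, ← Finset.add_sum_erase _ _ (Finset.mem_univ i)]
        congr 1
        rw [smul_smul, ← pow_succ, Nat.sub_add_cancel (by omega)]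
      have e3 := e1.symm.trans e2
      simp only [smul_sub, Finset.sum_sub_distrib]
      rw [sub_eq_sub_iff_add_eq_add, e3, add_comm]
    have h3 := hx.pow _ i (Finset.notMem_erase _ _) _ t _ hs
    have h4 : InS Finset.univ (fun l => x l ^ t2 l) (y • c' i) := by
      have h5 : y • c' i = (y • c' i - x i • c i) + x i • c i := by abel
      rw [h5]
      refine InS.add ?_ ?_
      · refine h3.of_forall fun l hl c => ?_
        have := InS.single (a := fun l => x l ^ t2 l) (Finset.mem_univ l) c
        simp only [ht2 l (Finset.ne_of_mem_erase hl)] at this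
        exact this
      · have := InS.single (a := fun l => x l ^ t2 l) (Finset.mem_univ i) (c i)
        simpa only [ht2i, pow_one] using this
    have h6 := ih _ (hlt t2 ht2 (by omega)) t2 rfl _ h4
    rw [hc']
    refine Finset.sum_induction _ (InS Finset.univ _) (fun _ _ => InS.add) (InS.zero _ _) fun l _ => ?_
    by_cases hl : l = i
    · subst hl
      dsimp only
      obtain ⟨c2, hc2⟩ := h6
      rw [hc2, Finset.smul_sum]
      refine Finset.sum_induction _ (InS Finset.univ _) (fun _ _ => InS.add) (InS.zero _ _) fun l' _ => ?_
      by_cases hl' : l' = l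
      · subst hl'
        dsimp only
        rw [smul_smul, ht1i, ht2i, pow_one, ← pow_succ, Nat.sub_add_cancel (by omega)]
        exact InS.single (a := fun l => x l ^ t l) (Finset.mem_univ l') _
      · dsimp only
        rw [smul_comm, ht2 _ hl']
        exact InS.single (a := fun l => x l ^ t l) (Finset.mem_univ l') _
    · dsimp only
      rw [ht1 l hl]
      exact InS.single (a := fun l => x l ^ t l) (Finset.mem_univ l) _
  · have h1 : ∀ i, t i = 1 := fun i => by
      have := not_exists.mp h0 i
      have := not_exists.mp h2 i
      omega
    have h3 : (fun l => x l ^ t l) = x := by ext l; simp [h1]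
    rw [h3] at hm ⊢
    exact hy m hm

lemma SR_ext_a2 [Fintype ι] [IsNoetherianRing B] [IsLocalRing B] {x : ι → B} (hx : SR B x) (hxm : ∀ i, x i ∈ maximalIdeal B) (y : B)
    (hy : ∀ m : B, InS Finset.univ x (y • m) → InS Finset.univ x m) (s : Finset ι) (b : ℕ) (t : ι → ℕ) (m : B)
    (hm : InS s (fun l => x l ^ t l) (y ^ b • m)) : InS s (fun l => x l ^ t l) m := by
  suffices H : ∀ m : B, InS s (fun l => x l ^ t l) (y • m) → InS s (fun l => x l ^ t l) m by
    induction b with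
    | zero => simpa using hm
    | succ b ih =>
      apply ih
      apply H
      rwa [smul_smul, ← pow_succ']
  clear hm m b
  intro m hm
  rw [InS_iff_mem_span]
  refine krull_closed _ _ fun N => ?_
  let tN : ι → ℕ := fun l => if l ∈ s then t l else N
  have h1 : InS Finset.univ (fun l => x l ^ tN l) (y • m) := by
    refine hm.of_forall fun l hl c => ?_
    have := InS.single (a := fun l => x l ^ tN l) (Finset.mem_univ l) c
    simpa only [tN, hl, if_true] using this
  obtain ⟨c, hc⟩ := SR_ext_a1 hx y hy _ tN rfl m h1
  rw [hc]
  refine Ideal.sum_mem _ fun l _ => ?_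
  rw [smul_eq_mul]
  refine Ideal.mul_mem_right _ _ ?_
  by_cases hl : l ∈ s
  · refine Ideal.mem_sup_left (Ideal.subset_span ⟨l, hl, ?_⟩)
    simp [tN, hl]
  · refine Ideal.mem_sup_right ?_
    simp only [tN, hl, if_false]
    exact Ideal.pow_mem_pow (hxm l) N

lemma InS_option (x : Option ι → B) (s : Finset (Option ι)) (m : M) :
    InS s x m ↔ ∃ c0 : M, InS s.eraseNone (fun l => x (some l)) (m - (if none ∈ s then x none else 0) • c0) := by
  have key : ∀ c : Option ι → M, ∑ l ∈ s, x l • c l = (if none ∈ s then x none else 0) • c none + ∑ l ∈ s.eraseNone, x (some l) • c (some l) := by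
    intro c
    have h0 : ∑ l ∈ s.eraseNone, x (some l) • c (some l) = ∑ l ∈ s.erase none, x l • c l := by
      rw [← Finset.map_some_eraseNone, Finset.sum_map]
      rfl
    rw [h0]
    by_cases h : none ∈ s
    · rw [if_pos h, ← Finset.add_sum_erase _ _ h]
    · rw [if_neg h, zero_smul, zero_add, Finset.erase_eq_of_notMem h]
  constructor
  · rintro ⟨c, rfl⟩
    refine ⟨c none, fun l => c (some l), ?_⟩
    rw [key]; abel
  · rintro ⟨c0, c, hc⟩
    refine ⟨fun l => l.elim c0 c, ?_⟩
    rw [key]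
    simp only [Option.elim]
    rw [← hc]; abel

lemma SR_ext [Fintype ι] [IsNoetherianRing B] [IsLocalRing B] {x : ι → B} (hx : SR B x) (hxm : ∀ i, x i ∈ maximalIdeal B) (y : B)
    (hy : ∀ m : B, InS Finset.univ x (y • m) → InS Finset.univ x m) : 
    SR B (fun o : Option ι => o.elim y x) := by
  intro s i hi t m hm
  rw [InS_option] at hm ⊢
  simp only [Option.elim] at hm ⊢
  obtain ⟨c0, hc0⟩ := hm
  cases i with
  | none =>
    rw [if_neg hi] at hc0 ⊢
    simp only [zero_smul, sub_zero] at hc0 ⊢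
    exact ⟨0, SR_ext_a2 hx hxm y hy _ 1 (fun l => t (some l)) m (by rwa [pow_one])⟩
  | some i =>
    have hi' : i ∉ s.eraseNone := by rwa [Finset.mem_eraseNone]
    simp only at hc0
    by_cases hn : none ∈ s
    · rw [if_pos hn] at hc0 ⊢
      let t' : ι → ℕ := Function.update (fun l => t (some l)) i 1
      have h1 : InS (insert i s.eraseNone) (fun l => x l ^ t' l) (y ^ t none • c0) := by
        have h2 : y ^ t none • c0 = x i • m - (x i • m - y ^ t none • c0) := by abel
        rw [h2]
        refine InS.sub ?_ ?_
        · have := InS.single (a := fun l => x l ^ t' l) (Finset.mem_insert_self i s.eraseNone) m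
          simpa [t'] using this
        · refine hc0.of_forall fun l hl c => ?_
          have hne : l ≠ i := by rintro rfl; exact hi' hl
          have := InS.single (a := fun l => x l ^ t' l) (Finset.mem_insert_of_mem hl : l ∈ insert i s.eraseNone) c
          simpa only [t', Function.update_of_ne hne] using this
      obtain ⟨d, hd⟩ := SR_ext_a2 hx hxm y hy _ _ _ _ h1
      rw [Finset.sum_insert hi'] at hd
      refine ⟨d i, hx _ i hi' (fun l => t (some l)) _ ?_⟩
      have h3 : x i • (m - y ^ t none • d i) = (x i • m - y ^ t none • c0) + y ^ t none • (c0 - x i • d i) := by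
        rw [smul_sub, smul_sub, smul_comm (x i)]; abel
      rw [h3]
      refine hc0.add (InS.smul _ ?_)
      refine ⟨d, ?_⟩
      simp only [t', Function.update_self, pow_one] at hd
      rw [hd, add_sub_cancel_left]
      refine Finset.sum_congr rfl fun l hl => ?_
      have hne : l ≠ i := by rintro rfl; exact hi' hl
      rw [Function.update_of_ne hne]
    · rw [if_neg hn] at hc0 ⊢
      simp only [zero_smul, sub_zero] at hc0 ⊢
      exact ⟨0, hx _ i hi' (fun l => t (some l)) _ hc0⟩

theorem exists_max_SR (B : Type) [CommRing B] [IsNoetherianRing B] [IsLocalRing B] :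
    ∃ (ι : Type) (_ : Fintype ι) (_ : DecidableEq ι) (x : ι → B), (∀ i, x i ∈ maximalIdeal B) ∧ SR B x ∧
      ∃ z : B, z ∉ Ideal.span (Set.range x) ∧ ∀ a ∈ maximalIdeal B, a * z ∈ Ideal.span (Set.range x) := by
  classical
  let S : Set (Ideal B) := {I | ∃ (ι : Type) (_ : Fintype ι) (_ : DecidableEq ι) (x : ι → B), (∀ i, x i ∈ maximalIdeal B) ∧ SR B x ∧ I = Ideal.span (Set.range x)}
  have hS : S.Nonempty := ⟨_, Empty, inferInstance, inferInstance, Empty.elim, fun i => i.elim, fun _ i => i.elim, rfl⟩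
  obtain ⟨I, ⟨ι, _, _, x, hxm, hx, rfl⟩, hmax⟩ := set_has_maximal_iff_noetherian.mpr (inferInstance : IsNoetherian B B) S hS
  refine ⟨ι, inferInstance, inferInstance, x, hxm, hx, ?_⟩
  set I := Ideal.span (Set.range x) with hI
  have hIm : I ≤ maximalIdeal B := by rw [hI, Ideal.span_le]; rintro _ ⟨i, rfl⟩; exact hxm i
  have hInS : ∀ m : B, InS Finset.univ x m ↔ m ∈ I := fun m => by
    rw [InS_iff_mem_span, Finset.coe_univ, Set.image_univ]
  have hzd : ∀ y ∈ maximalIdeal B, ∃ m : B, y * m ∈ I ∧ m ∉ I := by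
    intro y hy
    by_contra hcon
    push Not at hcon
    have hy' : ∀ m : B, InS Finset.univ x (y • m) → InS Finset.univ x m := by
      intro m
      rw [hInS, hInS]
      exact hcon m
    have hSR := SR_ext hx hxm y hy'
    have h1 := hmax (Ideal.span (Set.range (fun o : Option ι => o.elim y x))) ⟨Option ι, inferInstance, inferInstance, _, by
      rintro (_ | i)
      · exact hy
      · exact hxm i, hSR, rfl⟩
    apply h1
    have hle : I ≤ Ideal.span (Set.range (fun o : Option ι => o.elim y x)) := by
      rw [hI, Ideal.span_le]
      rintro _ ⟨i, rfl⟩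
      exact Ideal.subset_span ⟨some i, rfl⟩
    refine lt_of_le_of_ne hle fun heq => ?_
    have hyI : y ∈ I := by rw [heq]; exact Ideal.subset_span ⟨none, rfl⟩
    have : (1 : B) ∈ I := hcon 1 (by rwa [mul_one])
    exact (Ideal.ne_top_iff_one (maximalIdeal B)).mp (Ideal.IsPrime.ne_top inferInstance) (hIm this)
  have hsub : (maximalIdeal B : Set B) ⊆ ⋃ p ∈ associatedPrimes B (B ⧸ I), (p : Set B) := by
    intro y hy
    rw [biUnion_associatedPrimes_eq_zero_divisors]
    obtain ⟨m, hm1, hm2⟩ := hzd y hy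
    refine ⟨Ideal.Quotient.mk I m, by rwa [Ne, Ideal.Quotient.eq_zero_iff_mem], ?_⟩
    rw [Algebra.smul_def, Ideal.Quotient.algebraMap_eq, ← map_mul, Ideal.Quotient.eq_zero_iff_mem]
    exact hm1
  obtain ⟨p, hp, hmp⟩ := ((maximalIdeal B).subset_union_prime_finite (associatedPrimes.finite B (B ⧸ I)) (f := id) 0 0 fun _ h _ _ ↦ h.1).1 hsub
  have hpp := hp.1
  obtain ⟨zq, hz⟩ := ((isAssociatedPrime_iff).mp hp).2
  obtain ⟨z, rfl⟩ := Ideal.Quotient.mk_surjective zq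
  have hcol : ∀ a : B, a ∈ p ↔ a * z ∈ I := by
    intro a
    rw [hz, Submodule.mem_colon_singleton, Algebra.smul_def, Ideal.Quotient.algebraMap_eq, ← map_mul, Submodule.mem_bot, Ideal.Quotient.eq_zero_iff_mem]
  refine ⟨z, fun hzI => ?_, fun a ha => (hcol a).mp (hmp ha)⟩
  apply hpp.ne_top
  rw [Ideal.eq_top_iff_one, hcol, one_mul]
  exact hzI

end SRsec

section SysTriv
variable {A M : Type} [CommRing A] [AddCommGroup M] [Module A M]

/-- the system of relations is trivial -/
def SysTriv {l k : Type} [Fintype k] (r : l → k → A) (m : k → M) : Prop :=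
  ∃ (κ : Type) (_ : Fintype κ) (a : k → κ → A) (y : κ → M), (∀ i, m i = ∑ j, a i j • y j) ∧ ∀ jj j, ∑ i, r jj i * a i j = 0

lemma SysTriv.zero {l k : Type} [Fintype k] (r : l → k → A) : SysTriv r (0 : k → M) :=
  ⟨Empty, inferInstance, fun _ e => e.elim, Empty.elim, by simp, fun _ e => e.elim⟩

lemma SysTriv.smul {l k : Type} [Fintype k] {r : l → k → A} {m : k → M} (c : A) (h : SysTriv r m) : SysTriv r (c • m) := by
  obtain ⟨κ, _, a, y, h1, h2⟩ := h
  exact ⟨κ, inferInstance, a, fun j => c • y j, fun i => by simp [h1, Finset.smul_sum, smul_comm c], h2⟩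

lemma SysTriv.add {l k : Type} [Fintype k] {r : l → k → A} {m m' : k → M} (h : SysTriv r m) (h' : SysTriv r m') :
    SysTriv r (m + m') := by
  obtain ⟨κ, _, a, y, h1, h2⟩ := h
  obtain ⟨κ', _, a', y', h1', h2'⟩ := h'
  refine ⟨κ ⊕ κ', inferInstance, fun i => Sum.elim (a i) (a' i), Sum.elim y y', fun i => by simp [h1, h1'], ?_⟩
  rintro jj (j | j)
  · simpa using h2 jj j
  · simpa using h2' jj j

/-- ideal of multipliers -/
def SysTriv.ideal {l k : Type} [Fintype k] (r : l → k → A) (m : k → M) : Ideal A where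
  carrier := {c | SysTriv r (c • m)}
  add_mem' := fun {a b} ha hb => by
    have := SysTriv.add ha hb
    rwa [← add_smul] at this
  zero_mem' := by
    show SysTriv r ((0 : A) • m)
    rw [zero_smul]; exact SysTriv.zero r
  smul_mem' := fun c a h => by
    have := SysTriv.smul c h
    rwa [smul_smul] at this

lemma SysTriv.of_flat [Module.Flat A M] {l k : Type} [Fintype l] [Fintype k] (r : l → k → A) (m : k → M)
    (h : ∀ j, ∑ i, r j i • m i = 0) : SysTriv r m := by
  classical
  let f : (l → A) →ₗ[A] (k → A) := Fintype.linearCombination A r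
  let x : (k → A) →ₗ[A] M := Fintype.linearCombination A m
  obtain ⟨n, a, y, hxy, haf⟩ := Module.Flat.exists_factorization_of_comp_eq_zero_of_free (f := f) (x := x) (by
    ext j
    simp [f, x, Fintype.linearCombination_apply, h])
  refine ⟨Fin n, inferInstance, fun i j => a (Pi.single i 1) j, fun j => y (Finsupp.single j 1), fun i => ?_, fun jj j => ?_⟩
  · have h1 := LinearMap.congr_fun hxy (Pi.single i 1)
    simp only [x, Fintype.linearCombination_apply_single, one_smul, LinearMap.comp_apply] at h1
    rw [h1]
    conv_lhs => rw [← Finsupp.univ_sum_single (a (Pi.single i 1))]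
    rw [map_sum]
    refine Finset.sum_congr rfl fun j _ => ?_
    rw [← map_smul, Finsupp.smul_single, smul_eq_mul, mul_one]
  · have h1 := LinearMap.congr_fun haf (Pi.single jj 1)
    simp only [f, Fintype.linearCombination_apply_single, one_smul, LinearMap.comp_apply, LinearMap.zero_apply] at h1
    have h2 : r jj = ∑ i, r jj i • (Pi.single i 1 : k → A) := by
      ext i; simp [Finset.sum_apply, Pi.single_apply]
    rw [h2, map_sum] at h1
    have h3 := DFunLike.congr_fun h1 j
    simpa [Finsupp.finsetSum_apply] using h3

lemma flat_of_sysTriv (h : ∀ (k : Type) [Fintype k] (r : Unit → k → A) (m : k → M), (∀ j, ∑ i, r j i • m i = 0) → SysTriv r m) :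
    Module.Flat A M := by
  refine Module.Flat.of_forall_isTrivialRelation fun {l f x} hfx => ?_
  obtain ⟨κ, _, a, y, h1, h2⟩ := h (Fin l) (fun _ => f) x (fun _ => hfx)
  let e := Fintype.equivFin κ
  refine ⟨Fintype.card κ, fun i j => a i (e.symm j), fun j => y (e.symm j), fun i => ?_, fun j => h2 () _⟩
  rw [h1, ← e.symm.sum_comp]

/-- local factorization at a prime -/
def LFac (q : Ideal A) (M : Type) [AddCommGroup M] [Module A M] : Prop :=
  ∀ (l k : Type) [Fintype l] [Fintype k] (r : l → k → A) (m : k → M), (∀ j, ∑ i, r j i • m i = 0) → ∃ c, c ∉ q ∧ SysTriv r (c • m)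

lemma flat_of_LFac (h : ∀ q : Ideal A, q.IsPrime → LFac q M) : Module.Flat A M := by
  refine flat_of_sysTriv fun k _ r m hr => ?_
  have h1 : SysTriv.ideal r m = ⊤ := by
    by_contra hne
    obtain ⟨q, hq, hle⟩ := Ideal.exists_le_maximal _ hne
    obtain ⟨c, hc, hc'⟩ := h q hq.isPrime _ _ r m hr
    exact hc (hle hc')
  have h2 : (1 : A) ∈ SysTriv.ideal r m := h1 ▸ trivial
  have h3 : SysTriv r ((1 : A) • m) := h2
  rwa [one_smul] at h3

lemma mem_pow_of_not_le [IsLocalRing A] (J : Ideal A) (h : ∀ q : Ideal A, q.IsPrime → q ≠ maximalIdeal A → ¬ J ≤ q)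
    (a : A) (ha : a ∈ maximalIdeal A) : ∃ e : ℕ, a ^ e ∈ J := by
  have : a ∈ J.radical := by
    rw [Ideal.radical_eq_sInf, Ideal.mem_sInf]
    rintro q ⟨hJq, hq⟩
    by_cases hqm : q = maximalIdeal A
    · rw [hqm]; exact ha
    · exact absurd hJq (h q hq hqm)
  exact this

/-- kernel of a surjection from a flat module inherits local factorization -/
lemma LFac.ker {q : Ideal A} (hM : LFac q M) {F : Type} [AddCommGroup F] [Module A F] [Module.Flat A F]
    (g : F →ₗ[A] M) (hg : Function.Surjective g) : LFac q (LinearMap.ker g) := by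
  intro l k _ _ r m hr
  obtain ⟨κ, _, a, y, h1, h2⟩ := SysTriv.of_flat r (fun i => (m i : F)) (fun j => by
    simpa using congrArg Subtype.val (hr j))
  obtain ⟨c, hc, κ', _, d, w, h3, h4⟩ := hM k κ a (fun j => g (y j)) (fun i => by
    rw [← Finset.sum_congr rfl (fun j _ => map_smul g _ _), ← map_sum, ← h1]
    exact (m i).2)
  choose w' hw' using fun j => hg (w j)
  refine ⟨c, hc, κ, inferInstance, a, fun j => ⟨c • y j - ∑ jj, d j jj • w' jj, ?_⟩, fun i => ?_, h2⟩
  · rw [LinearMap.mem_ker, map_sub, map_smul, map_sum]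
    simp only [map_smul, hw']
    rw [sub_eq_zero]
    exact h3 j
  · ext
    simp only [Pi.smul_apply, Submodule.coe_smul, AddSubmonoidClass.coe_finsetSum, smul_sub, Finset.sum_sub_distrib]
    have h1' : ∀ i, (m i : F) = ∑ j, a i j • y j := h1
    rw [h1', Finset.smul_sum]
    simp only [smul_comm c]
    rw [eq_comm, sub_eq_self]
    simp only [Finset.smul_sum, smul_smul]
    rw [Finset.sum_comm]
    refine Finset.sum_eq_zero fun jj _ => ?_
    rw [← Finset.sum_smul, h4, zero_smul]

end SysTriv

section PropF
variable {A F : Type} [CommRing A] [AddCommGroup F] [Module A F]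

lemma flat_colon [Module.Flat A F] (I : Ideal A) (a : A) (f : F) (h : a • f ∈ I • (⊤ : Submodule A F)) :
    f ∈ (I.colon {a}) • (⊤ : Submodule A F) := by
  classical
  obtain ⟨n, c, g, hc, hsum⟩ : ∃ (n : ℕ) (c : Fin n → A) (g : Fin n → F), (∀ i, c i ∈ I) ∧ a • f = ∑ i, c i • g i := by
    refine Submodule.smul_induction_on h ?_ ?_
    · intro r hr n _
      exact ⟨1, fun _ => r, fun _ => n, fun _ => hr, by simp⟩
    · rintro x y ⟨n, c, g, hc, hs⟩ ⟨n', c', g', hc', hs'⟩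
      refine ⟨n + n', Fin.append c c', Fin.append g g', fun i => ?_, ?_⟩
      · refine Fin.addCases (fun i => ?_) (fun i => ?_) i
        · simpa using hc i
        · simpa using hc' i
      · rw [hs, hs', Fin.sum_univ_add]; simp
  obtain ⟨κ, _, b, y, h1, h2⟩ := SysTriv.of_flat (l := Unit) (fun _ (o : Option (Fin n)) => o.elim (-a) c) (fun o => o.elim f g) (by
    intro _
    rw [Fintype.sum_option]
    simp only [Option.elim]
    rw [← hsum]; simp)
  have h3 := h1 none
  simp only [Option.elim] at h3
  rw [h3]
  refine Submodule.sum_mem _ fun j _ => Submodule.smul_mem_smul ?_ trivial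
  have h4 := h2 () j
  rw [Fintype.sum_option] at h4
  simp only [Option.elim] at h4
  rw [Submodule.mem_colon_singleton, smul_eq_mul]
  have h5 : b none j * a = ∑ i, c i * b (some i) j := by linear_combination -h4
  rw [h5]
  exact Ideal.sum_mem _ fun i _ => Ideal.mul_mem_right _ _ (hc i)

/-- purity with respect to an ideal -/
def TI (K : Submodule A F) (I : Ideal A) : Prop := ∀ k ∈ K, k ∈ I • (⊤ : Submodule A F) → k ∈ I • K

lemma flat_colon_sub (K : Submodule A F) [Module.Flat A K] (I : Ideal A) (a : A) (k : F) (hk : k ∈ K) (h : a • k ∈ I • K) :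
    k ∈ (I.colon {a}) • K := by
  have h1 : a • (⟨k, hk⟩ : K) ∈ I • (⊤ : Submodule A K) := by
    rw [Submodule.mem_smul_top_iff]; exact h
  have h2 := flat_colon I a _ h1
  rwa [Submodule.mem_smul_top_iff] at h2

lemma exists_sum_of_mem_smul_top (I : Ideal A) (f : F) (h : f ∈ I • (⊤ : Submodule A F)) :
    ∃ (n : ℕ) (c : Fin n → A) (g : Fin n → F), (∀ i, c i ∈ I) ∧ f = ∑ i, c i • g i := by
  refine Submodule.smul_induction_on h ?_ ?_
  · intro r hr n _
    exact ⟨1, fun _ => r, fun _ => n, fun _ => hr, by simp⟩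
  · rintro x y ⟨n, c, g, hc, hs⟩ ⟨n', c', g', hc', hs'⟩
    refine ⟨n + n', Fin.append c c', Fin.append g g', fun i => ?_, ?_⟩
    · refine Fin.addCases (fun i => ?_) (fun i => ?_) i
      · simpa using hc i
      · simpa using hc' i
    · rw [hs, hs', Fin.sum_univ_add]; simp

variable {M : Type} [AddCommGroup M] [Module A M]

lemma flat_of_TI [Module.Flat A F] (g : F →ₗ[A] M) (hg : Function.Surjective g)
    (h : ∀ I : Ideal A, TI (LinearMap.ker g) I) : Module.Flat A M := by
  refine flat_of_sysTriv fun k _ r m hr => ?_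
  choose f hf using fun i => hg (m i)
  have h1 := h (Ideal.span (Set.range (r ()))) (∑ i, r () i • f i) (by
    rw [LinearMap.mem_ker, map_sum]; simpa [hf] using hr ()) 
    (Submodule.sum_mem _ fun i _ => Submodule.smul_mem_smul (Ideal.subset_span ⟨i, rfl⟩) trivial)
  have h2 : ∃ κ : k → F, (∀ i, κ i ∈ LinearMap.ker g) ∧ ∑ i, r () i • f i = ∑ i, r () i • κ i := by
    refine Submodule.smul_induction_on h1 ?_ ?_
    · intro a ha n hn
      obtain ⟨c, hc⟩ := (Ideal.mem_span_range_iff_exists_fun).mp ha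
      refine ⟨fun i => c i • n, fun i => Submodule.smul_mem _ _ hn, ?_⟩
      rw [← hc, Finset.sum_smul]
      exact Finset.sum_congr rfl fun i _ => by rw [smul_smul, mul_comm]
    · rintro x y ⟨κ, hκ, hs⟩ ⟨κ', hκ', hs'⟩
      refine ⟨κ + κ', fun i => Submodule.add_mem _ (hκ i) (hκ' i), ?_⟩
      rw [hs, hs', ← Finset.sum_add_distrib]
      exact Finset.sum_congr rfl fun i _ => by simp
  obtain ⟨κ, hκ, hs⟩ := h2
  obtain ⟨I, _, a, y, h3, h4⟩ := SysTriv.of_flat (l := Unit) r (fun i => f i - κ i) (fun j => by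
    simp only [smul_sub, Finset.sum_sub_distrib]; rw [sub_eq_zero]; exact hs)
  refine ⟨I, inferInstance, a, fun j => g (y j), fun i => ?_, h4⟩
  have h5 := congrArg g (h3 i)
  rw [map_sub, hf, LinearMap.mem_ker.mp (hκ i), sub_zero, map_sum] at h5
  simpa using h5

lemma InS_iff_mem_span_smul {ι : Type} [DecidableEq ι] (s : Finset ι) (a : ι → A) (K : Submodule A F) (m : F) :
    m ∈ Ideal.span (a '' s) • K ↔ ∃ c : ι → F, (∀ l, c l ∈ K) ∧ m = ∑ l ∈ s, a l • c l := by
  constructor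
  · intro h
    refine Submodule.smul_induction_on h ?_ ?_
    · intro r hr n hn
      rw [← InS_iff_mem_span] at hr
      obtain ⟨c, hc⟩ := hr
      refine ⟨fun l => c l • n, fun l => K.smul_mem _ hn, ?_⟩
      rw [hc, Finset.sum_smul]
      simp [smul_smul]
    · rintro x y ⟨c, h1, rfl⟩ ⟨c', h1', rfl⟩
      exact ⟨c + c', fun l => K.add_mem (h1 l) (h1' l), by simp [Finset.sum_add_distrib]⟩
  · rintro ⟨c, h1, rfl⟩
    exact Submodule.sum_mem _ fun l hl => Submodule.smul_mem_smul (Ideal.subset_span ⟨l, hl, rfl⟩) (h1 l)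

lemma TI_SR {ι : Type} [DecidableEq ι] (g : F →ₗ[A] M) (hg : Function.Surjective g) {x : ι → A} (hx : SR M x) (t : ι → ℕ)
    (s : Finset ι) : TI (LinearMap.ker g) (Ideal.span ((fun l => x l ^ t l) '' s)) := by
  induction s using Finset.induction_on with
  | empty =>
    intro k _ hk
    simp only [Finset.coe_empty, Set.image_empty, Ideal.span_empty, Submodule.bot_smul] at hk ⊢
    exact hk
  | insert i s hi ih =>
    intro k hkK hk
    rw [InS_iff_mem_span_smul] at hk
    obtain ⟨c, -, hc⟩ := hk
    rw [Finset.sum_insert hi] at hc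
    have h1 : InS s (fun l => x l ^ t l) (x i ^ t i • g (c i)) := by
      refine ⟨fun l => - g (c l), ?_⟩
      have h2 := congrArg g hc
      rw [LinearMap.mem_ker.mp hkK, map_add, map_sum, map_smul] at h2
      simp only [map_smul] at h2
      rw [eq_neg_of_add_eq_zero_left h2.symm]
      simp
    obtain ⟨d, hd⟩ := hx.pow s i hi _ t _ h1
    choose d' hd' using fun l => hg (d l)
    set f2 := ∑ l ∈ s, x l ^ t l • d' l with hf2
    have hk' : c i - f2 ∈ LinearMap.ker g := by
      rw [LinearMap.mem_ker, map_sub, hd, hf2, map_sum]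
      simp [hd']
    have h3 := ih (k - x i ^ t i • (c i - f2)) (Submodule.sub_mem _ hkK (Submodule.smul_mem _ _ hk')) (by
      rw [InS_iff_mem_span_smul]
      refine ⟨fun l => c l + x i ^ t i • d' l, fun _ => trivial, ?_⟩
      rw [hc]
      simp only [smul_add, Finset.sum_add_distrib, smul_comm _ (x i ^ t i), ← Finset.smul_sum]
      rw [smul_sub]
      abel)
    have h4 : k = (k - x i ^ t i • (c i - f2)) + x i ^ t i • (c i - f2) := by abel
    rw [h4]
    refine Submodule.add_mem _ ?_ (Submodule.smul_mem_smul (Ideal.subset_span ⟨i, by simp, rfl⟩) hk')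
    exact Submodule.smul_mono_left (Ideal.span_mono (Set.image_mono (by simp))) h3

theorem propF [IsNoetherianRing A] [IsLocalRing A] [Module.Flat A F] (g : F →ₗ[A] M) (hg : Function.Surjective g)
    [Module.Flat A (LinearMap.ker g)] (hloc : ∀ q : Ideal A, q.IsPrime → q ≠ maximalIdeal A → LFac q M)
    {ι : Type} [Fintype ι] [DecidableEq ι] {x : ι → A} (hx : SR M x) (z : A) (hz : z ∉ Ideal.span (Set.range x))
    (hmz : ∀ a ∈ maximalIdeal A, a * z ∈ Ideal.span (Set.range x)) : Module.Flat A M := by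
  refine flat_of_TI g hg fun I => ?_
  induction I using WellFoundedGT.induction with
  | ind I ih =>
  by_cases htop : I = ⊤
  · intro k hk _
    rw [htop, Submodule.top_smul]; exact hk
  by_cases hI : I.IsPrime
  · by_cases hm : I = maximalIdeal A
    · intro k hk hkI
      have hrange : Ideal.span (Set.range x) = Ideal.span ((fun l => x l ^ 1) '' (Finset.univ : Finset ι)) := by
        simp
      have h1 : z • k ∈ Ideal.span (Set.range x) • LinearMap.ker g := by
        have h2 := TI_SR g hg hx (fun _ => 1) Finset.univ
        rw [hrange]
        refine h2 _ (Submodule.smul_mem _ _ hk) ?_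
        rw [← hrange]
        rw [hm] at hkI
        refine Submodule.smul_induction_on hkI ?_ ?_
        · intro r hr n _
          rw [smul_smul, mul_comm]
          exact Submodule.smul_mem_smul (hmz r hr) trivial
        · intro a b ha hb
          rw [smul_add]; exact Submodule.add_mem _ ha hb
      have h3 := flat_colon_sub _ _ _ _ hk h1
      refine Submodule.smul_mono_left ?_ h3
      rw [hm]
      apply IsLocalRing.le_maximalIdeal
      intro h4
      apply hz
      have h5 : (1 : A) ∈ (Ideal.span (Set.range x)).colon {z} := h4 ▸ trivial
      rw [Submodule.mem_colon_singleton, one_smul] at h5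
      exact h5
    · intro k hk hkI
      obtain ⟨s, hs, hsI⟩ : ∃ s ∈ maximalIdeal A, s ∉ I := by
        by_contra hcon
        push Not at hcon
        exact hm (le_antisymm (IsLocalRing.le_maximalIdeal htop) hcon)
      let J : Ideal A := (I • LinearMap.ker g).colon {k}
      obtain ⟨e, he⟩ := mem_pow_of_not_le J (fun q hq hqm hle => by
        obtain ⟨n, c, f, hc, hkf⟩ := exists_sum_of_mem_smul_top I k hkI
        obtain ⟨b, hb, κ, _, a, y, h1, h2⟩ := hloc q hq hqm Unit (Fin n) (fun _ => c) (fun i => g (f i)) (fun _ => by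
          have := congrArg g hkf
          rw [LinearMap.mem_ker.mp hk, map_sum] at this
          simpa using this.symm)
        apply hb
        apply hle
        rw [Submodule.mem_colon_singleton]
        choose y' hy' using fun j => hg (y j)
        have h2' : ∀ j, ∑ i, c i * a i j = 0 := h2 ()
        have h3 : b • k = ∑ i, c i • (b • f i - ∑ j, a i j • y' j) := by
          simp only [smul_sub, Finset.sum_sub_distrib, Finset.smul_sum, smul_smul]
          rw [Finset.sum_comm (f := fun i j => (c i * a i j) • y' j)]
          simp only [← Finset.sum_smul, h2', zero_smul, Finset.sum_const_zero, sub_zero]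
          rw [hkf, Finset.smul_sum]
          simp [smul_smul, mul_comm]
        rw [h3]
        refine Submodule.sum_mem _ fun i _ => Submodule.smul_mem_smul (hc i) ?_
        rw [LinearMap.mem_ker, map_sub, map_smul, map_sum]
        simp only [map_smul, hy']
        rw [sub_eq_zero]; exact h1 i) s hs
      rw [Submodule.mem_colon_singleton] at he
      have h4 := flat_colon_sub _ _ _ _ hk he
      refine Submodule.smul_mono_left ?_ h4
      intro a ha
      rw [Submodule.mem_colon_singleton, smul_eq_mul] at ha
      exact (hI.mem_or_mem ha).resolve_right (fun h => hsI (hI.mem_of_pow_mem _ h))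
  · rw [Ideal.isPrime_iff] at hI
    push Not at hI
    obtain ⟨a, b, hab, ha, hb⟩ := hI htop
    have hlt1 : I < I ⊔ Ideal.span {a} := by
      refine lt_of_le_of_ne le_sup_left fun h => ha ?_
      rw [h]; exact Ideal.mem_sup_right (Ideal.mem_span_singleton_self a)
    have hlt2 : I < I.colon {a} := by
      refine lt_of_le_of_ne (fun c hc => ?_) fun h => hb ?_
      · rw [Submodule.mem_colon_singleton, smul_eq_mul]; exact Ideal.mul_mem_right _ _ hc
      · rw [h, Submodule.mem_colon_singleton, smul_eq_mul, mul_comm]; exact hab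
    intro k hk hkI
    have h1 := ih _ hlt1 k hk (Submodule.smul_mono_left le_sup_left hkI)
    rw [Submodule.sup_smul] at h1
    obtain ⟨k1, hk1, w, hw, rfl⟩ := Submodule.mem_sup.mp h1
    rw [Submodule.ideal_span_singleton_smul] at hw
    obtain ⟨k2, hk2, rfl⟩ := hw
    have hk2' : k2 ∈ LinearMap.ker g := hk2
    have h2 : a • k2 ∈ I • (⊤ : Submodule A F) := by
      have h3 := Submodule.sub_mem _ hkI (Submodule.smul_mono le_rfl le_top hk1)
      rw [add_sub_cancel_left] at h3
      exact h3
    have h4 := ih _ hlt2 k2 hk2' (flat_colon I a k2 h2)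
    refine Submodule.add_mem _ hk1 ?_
    show a • k2 ∈ _
    refine Submodule.smul_induction_on h4 ?_ ?_
    · intro r hr n hn
      rw [Submodule.mem_colon_singleton, smul_eq_mul] at hr
      rw [smul_smul, mul_comm]
      exact Submodule.smul_mem_smul hr hn
    · intro a b ha hb
      rw [smul_add]; exact Submodule.add_mem _ ha hb

end PropF

/-- flat dimension at most n -/
def FD (A : Type) [CommRing A] : ℕ → ∀ (M : Type) [AddCommGroup M] [Module A M], Prop
  | 0, M, _, _ => Module.Flat A M
  | n + 1, M, _, _ => ∃ (F : Type) (_ : AddCommGroup F) (_ : Module A F) (g : F →ₗ[A] M),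
      Module.Flat A F ∧ Function.Surjective g ∧ FD A n (LinearMap.ker g)

section
variable {A : Type} [CommRing A]

lemma SR.of_flat {ι : Type} [DecidableEq ι] {x : ι → A} (hx : SR A x) (F : Type) [AddCommGroup F] [Module A F]
    [Module.Flat A F] : SR F x := by
  intro s i hi t f hf
  have h1 : x i • f ∈ Ideal.span ((fun l => x l ^ t l) '' s) • (⊤ : Submodule A F) := by
    rw [InS_iff_mem_span_smul]
    obtain ⟨c, hc⟩ := hf
    exact ⟨c, fun _ => trivial, hc⟩
  have h2 := flat_colon _ _ _ h1
  have h3 : f ∈ Ideal.span ((fun l => x l ^ t l) '' s) • (⊤ : Submodule A F) := by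
    refine Submodule.smul_mono_left ?_ h2
    intro a ha
    rw [Submodule.mem_colon_singleton, smul_eq_mul] at ha
    rw [← InS_iff_mem_span] at ha ⊢
    refine hx s i hi t a ?_
    rwa [smul_eq_mul, mul_comm]
  rw [InS_iff_mem_span_smul] at h3
  obtain ⟨c, -, hc⟩ := h3
  exact ⟨c, hc⟩

lemma SR.ker {ι : Type} [DecidableEq ι] {x : ι → A} {F M : Type} [AddCommGroup F] [Module A F]
    [AddCommGroup M] [Module A M] (hF : SR F x) (hM : SR M x) (g : F →ₗ[A] M) (hg : Function.Surjective g) :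
    SR (LinearMap.ker g) x := by
  intro s i hi t f hf
  have h1 : InS s (fun l => x l ^ t l) (x i • (f : F)) := by
    obtain ⟨c, hc⟩ := hf
    exact ⟨fun l => (c l : F), by simpa using congrArg Subtype.val hc⟩
  obtain ⟨c, hc⟩ := hF s i hi t _ h1
  have h2 := TI_SR g hg hM t s f f.2 (by
    rw [InS_iff_mem_span_smul]
    exact ⟨c, fun _ => trivial, hc⟩)
  rw [InS_iff_mem_span_smul] at h2
  obtain ⟨c, hc1, hc2⟩ := h2
  exact ⟨fun l => ⟨c l, hc1 l⟩, by ext; simpa using hc2⟩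

theorem flat_of_FD [IsNoetherianRing A] [IsLocalRing A]
    {ι : Type} [Fintype ι] [DecidableEq ι] {x : ι → A} (hxA : SR A x) (z : A) (hz : z ∉ Ideal.span (Set.range x))
    (hmz : ∀ a ∈ maximalIdeal A, a * z ∈ Ideal.span (Set.range x)) (n : ℕ) :
    ∀ (M : Type) [AddCommGroup M] [Module A M]
    (_ : ∀ q : Ideal A, q.IsPrime → q ≠ maximalIdeal A → LFac q M) (_ : SR M x) (_ : FD A n M), Module.Flat A M := by
  induction n with
  | zero => intro M _ _ _ _ h; exact h
  | succ n ih =>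
    intro M _ _ hl hM h
    obtain ⟨F, _, _, g, hF, hg, hK⟩ := h
    have := ih (LinearMap.ker g) (fun q hq hqm => (hl q hq hqm).ker g hg) ((hxA.of_flat F).ker hM g hg) hK
    exact propF g hg hl hM z hz hmz

/-- finite flat resolution by f.g. free modules -/
def PD (A : Type) [CommRing A] : ℕ → ∀ (M : Type) [AddCommGroup M] [Module A M], Prop
  | 0, M, _, _ => Module.Flat A M
  | n + 1, M, _, _ => ∃ (k : ℕ) (g : (Fin k → A) →ₗ[A] M), Function.Surjective g ∧ PD A n (LinearMap.ker g)

/-- canonical syzygy -/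
noncomputable abbrev Syz (A M : Type) [CommRing A] [AddCommGroup M] [Module A M] : Submodule A (M →₀ A) :=
  LinearMap.ker (Finsupp.linearCombination A (id : M → M))

lemma syz_surj (M : Type) [AddCommGroup M] [Module A M] : Function.Surjective (Finsupp.linearCombination A (id : M → M)) := 
  Finsupp.linearCombination_id_surjective A M

/-- relative Tor vanishing -/
def TorZ (A : Type) [CommRing A] (N : Type) [AddCommGroup N] [Module A N] : ℕ → ∀ (M : Type) [AddCommGroup M] [Module A M], Prop
  | 0, M, _, _ => Function.Injective (LinearMap.lTensor N (Syz A M).subtype)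
  | n + 1, M, _, _ => TorZ A N n (Syz A M)

lemma dim_shift {Z G N K' L' M' L : Type} [AddCommGroup Z] [AddCommGroup G] [AddCommGroup N] [AddCommGroup K']
    [AddCommGroup L'] [AddCommGroup M'] [AddCommGroup L] [Module A Z] [Module A G] [Module A N] [Module A K']
    [Module A L'] [Module A M'] [Module A L] [Module.Flat A G] [Module.Flat A L]
    (i : Z →ₗ[A] G) (π : G →ₗ[A] N) (j : K' →ₗ[A] L') (ρ : L' →ₗ[A] M') (κ : M' →ₗ[A] L)
    (hi : Function.Injective i) (hiπ : Function.Exact i π) (hπ : Function.Surjective π)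
    (hj : Function.Injective j) (hjρ : Function.Exact j ρ) (hρ : Function.Surjective ρ)
    (h : Function.Injective (LinearMap.lTensor Z κ)) : Function.Injective (LinearMap.lTensor N j) := by
  have h1 : Function.Injective (LinearMap.rTensor M' i) := by
    have e : (LinearMap.lTensor G κ) ∘ₗ (LinearMap.rTensor M' i) = (LinearMap.rTensor L i) ∘ₗ (LinearMap.lTensor Z κ) := by
      ext; simp
    have h2 : Function.Injective ((LinearMap.rTensor L i) ∘ₗ (LinearMap.lTensor Z κ)) := by
      rw [LinearMap.coe_comp]
      exact (Module.Flat.rTensor_preserves_injective_linearMap i hi).comp h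
    rw [← e, LinearMap.coe_comp] at h2
    exact h2.of_comp
  rw [injective_iff_map_eq_zero]
  intro ξ hξ
  obtain ⟨η, rfl⟩ := LinearMap.rTensor_surjective K' hπ ξ
  have h2 : LinearMap.rTensor L' π (LinearMap.lTensor G j η) = 0 := by
    rw [← hξ, ← LinearMap.comp_apply, ← LinearMap.comp_apply]
    congr 1; ext; simp
  obtain ⟨ζ, hζ⟩ := (rTensor_exact L' hiπ hπ _).mp h2
  have h3 : LinearMap.rTensor M' i (LinearMap.lTensor Z ρ ζ) = 0 := by
    have : LinearMap.rTensor M' i (LinearMap.lTensor Z ρ ζ) = LinearMap.lTensor G ρ (LinearMap.rTensor L' i ζ) := by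
      rw [← LinearMap.comp_apply, ← LinearMap.comp_apply]
      congr 1; ext; simp
    rw [this, hζ]
    exact (lTensor_exact G hjρ hρ _).mpr ⟨η, rfl⟩
  obtain ⟨θ, hθ⟩ := (lTensor_exact Z hjρ hρ _).mp ((injective_iff_map_eq_zero _).mp h1 _ h3)
  have h4 : LinearMap.lTensor G j (LinearMap.rTensor K' i θ) = LinearMap.lTensor G j η := by
    rw [← hζ, ← hθ, ← LinearMap.comp_apply, ← LinearMap.comp_apply]
    congr 1; ext; simp
  have h5 := Module.Flat.lTensor_preserves_injective_linearMap (M := G) j hj h4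
  exact (rTensor_exact K' hiπ hπ _).mpr ⟨θ, h5⟩

lemma dim_shift' {Z G N M' L L' : Type} [AddCommGroup Z] [AddCommGroup G] [AddCommGroup N] [Module A Z] [Module A G] [Module A N]
    [Module.Flat A G] (i : Z →ₗ[A] G) (π : G →ₗ[A] N)
    (hi : Function.Injective i) (hiπ : Function.Exact i π) (hπ : Function.Surjective π) 
    [AddCommGroup M'] [AddCommGroup L] [AddCommGroup L'] [Module A M'] [Module A L] [Module A L'] [Module.Flat A L] (κ : M' →ₗ[A] L)
    (h : Function.Injective (LinearMap.lTensor Z κ)) (ρ : L' →ₗ[A] M') (hρ : Function.Surjective ρ) :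
    Function.Injective (LinearMap.lTensor N (LinearMap.ker ρ).subtype) :=
  dim_shift i π (LinearMap.ker ρ).subtype ρ κ hi hiπ hπ
    (Submodule.subtype_injective (LinearMap.ker ρ)) (LinearMap.exact_subtype_ker_map ρ) hρ h

lemma TorZ.shift0 {Z G N M' L : Type} [AddCommGroup Z] [AddCommGroup G] [AddCommGroup N] [Module A Z] [Module A G] [Module A N]
    [Module.Flat A G] (i : Z →ₗ[A] G) (π : G →ₗ[A] N)
    (hi : Function.Injective i) (hiπ : Function.Exact i π) (hπ : Function.Surjective π) 
    [AddCommGroup M'] [AddCommGroup L] [Module A M'] [Module A L] [Module.Flat A L] (κ : M' →ₗ[A] L)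
    (h : Function.Injective (LinearMap.lTensor Z κ)) : TorZ A N 0 M' :=
  dim_shift' i π hi hiπ hπ κ h (Finsupp.linearCombination A (id : M' → M')) (syz_surj M')

lemma TorZ.shift {Z G N : Type} [AddCommGroup Z] [AddCommGroup G] [AddCommGroup N] [Module A Z] [Module A G] [Module A N]
    [Module.Flat A G] (i : Z →ₗ[A] G) (π : G →ₗ[A] N)
    (hi : Function.Injective i) (hiπ : Function.Exact i π) (hπ : Function.Surjective π) (n : ℕ) :
    ∀ (M : Type) [AddCommGroup M] [Module A M], TorZ A Z n M → TorZ A N (n + 1) M := by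
  induction n with
  | zero =>
    intro M _ _ h
    exact TorZ.shift0 i π hi hiπ hπ (Syz A M).subtype h
  | succ n ih =>
    intro M _ _ h
    exact ih (Syz A M) h

lemma TorZ.of_flat {N : Type} [AddCommGroup N] [Module A N] [Module.Flat A N] (n : ℕ) : 
    ∀ (M : Type) [AddCommGroup M] [Module A M], TorZ A N n M := by
  induction n with
  | zero =>
    intro M _ _
    exact Module.Flat.lTensor_preserves_injective_linearMap _ (Submodule.subtype_injective _)
  | succ n ih =>
    intro M _ _
    exact ih (Syz A M)

lemma TorZ.of_PD (n : ℕ) : ∀ (N : Type) [AddCommGroup N] [Module A N] (_ : PD A n N)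
    (M : Type) [AddCommGroup M] [Module A M], TorZ A N n M := by
  induction n with
  | zero =>
    intro N _ _ h M _ _
    have : Module.Flat A N := h
    exact TorZ.of_flat 0 M
  | succ n ih =>
    intro N _ _ h M _ _
    obtain ⟨k, g, hg, hK⟩ := h
    exact TorZ.shift (LinearMap.ker g).subtype g (Submodule.subtype_injective _) (LinearMap.exact_subtype_ker_map _) hg n M
      (ih _ hK M)

lemma TI_of_lTensor {F : Type} [AddCommGroup F] [Module A F] (K : Submodule A F) (I : Ideal A)
    (h : Function.Injective (LinearMap.lTensor (A ⧸ I) K.subtype)) : TI K I := by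
  intro k hk hkI
  have h1 : (1 : A ⧸ I) ⊗ₜ[A] k = 0 := by
    have := TensorProduct.quotTensorEquivQuotSMul_mk_tmul (M := F) I 1 k
    rw [map_one, one_smul, (Submodule.Quotient.mk_eq_zero _).mpr hkI] at this
    exact (LinearEquiv.map_eq_zero_iff _).mp this
  have h2 : (1 : A ⧸ I) ⊗ₜ[A] (⟨k, hk⟩ : K) = 0 := by
    apply h
    rw [map_zero, LinearMap.lTensor_tmul]; exact h1
  have := TensorProduct.quotTensorEquivQuotSMul_mk_tmul (M := K) I 1 ⟨k, hk⟩
  rw [map_one, one_smul, h2, map_zero, eq_comm, Submodule.Quotient.mk_eq_zero, Submodule.mem_smul_top_iff] at this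
  exact this

lemma FD.of_TorZ (n : ℕ) : ∀ (M : Type) [AddCommGroup M] [Module A M] (_ : ∀ I : Ideal A, TorZ A (A ⧸ I) n M), FD A n M := by
  induction n with
  | zero =>
    intro M _ _ h
    exact flat_of_TI _ (syz_surj M) fun I => TI_of_lTensor _ I (h I)
  | succ n ih =>
    intro M _ _ h
    exact ⟨M →₀ A, inferInstance, inferInstance, Finsupp.linearCombination A id, inferInstance, syz_surj M, ih _ h⟩

theorem FD.of_PD (n : ℕ) (h : ∀ I : Ideal A, PD A n (A ⧸ I)) (M : Type) [AddCommGroup M] [Module A M] : FD A n M :=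
  FD.of_TorZ n M fun I => TorZ.of_PD n _ (h I) M

theorem FD.localize (S : Submonoid A) (B : Type) [CommRing B] [Algebra A B] [IsLocalization S B] (n : ℕ) :
    ∀ (M M' : Type) [AddCommGroup M] [Module A M] [AddCommGroup M'] [Module A M'] [Module B M'] [IsScalarTower A B M']
    (f : M →ₗ[A] M') [IsLocalizedModule S f], FD A n M → FD B n M' := by
  induction n with
  | zero =>
    intro M M' _ _ _ _ _ _ f _ h
    have : Module.Flat A M := h
    exact Module.Flat.of_isLocalizedModule (R := A) B S f
  | succ n ih =>
    intro M M' _ _ _ _ _ _ f _ h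
    obtain ⟨F, _, _, g, hF, hg, hK⟩ := h
    let g' : (B ⊗[A] F) →ₗ[B] M' := (IsLocalizedModule.map S (TensorProduct.mk A B F 1) f g).extendScalarsOfIsLocalization S B
    refine ⟨B ⊗[A] F, inferInstance, inferInstance, g', inferInstance, ?_, ?_⟩
    · exact IsLocalizedModule.map_surjective S (TensorProduct.mk A B F 1) f g hg
    · have e : LinearMap.ker g' = Submodule.localized' B S (TensorProduct.mk A B F 1) (LinearMap.ker g) :=
        (LinearMap.localized'_ker_eq_ker_localizedMap B S (TensorProduct.mk A B F 1) f g).symm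
      rw [e]
      have : IsScalarTower A B (Submodule.localized' B S (TensorProduct.mk A B F 1) (LinearMap.ker g)) :=
        ⟨fun a b x => Subtype.ext (smul_assoc a b (x : B ⊗[A] F))⟩
      exact ih _ _ (Submodule.toLocalized' B S (TensorProduct.mk A B F 1) (LinearMap.ker g)) hK

end

lemma factorHyp_of_LFac {B C : Type} [CommRing B] [CommRing C] [Algebra B C] [IsNoetherianRing B] [IsLocalRing B]
    (h : ∀ q : Ideal B, q.IsPrime → q ≠ maximalIdeal B → LFac q C) (a : B) (ha : a ∈ maximalIdeal B) : FactorHyp B C a := by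
  classical
  intro R hR
  obtain ⟨k, m, hm⟩ := Submodule.fg_iff_exists_fin_generating_family.mp hR
  have hmR : ∀ i, m i ∈ R := fun i => hm ▸ Submodule.subset_span ⟨i, rfl⟩
  let L : (Fin k → B) →ₗ[B] R := Fintype.linearCombination B (fun i => (⟨m i, hmR i⟩ : R))
  have hL : ∀ c, (L c : C) = ∑ i, c i • m i := fun c => by simp [L, Fintype.linearCombination_apply]
  have hLs : Function.Surjective L := by
    rintro ⟨r, hr⟩
    rw [← hm, Submodule.mem_span_range_iff_exists_fun] at hr
    obtain ⟨c, hc⟩ := hr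
    exact ⟨c, Subtype.ext (by rw [hL, hc])⟩
  obtain ⟨l, r, hr⟩ := Submodule.fg_iff_exists_fin_generating_family.mp (IsNoetherian.noetherian (LinearMap.ker L))
  have hrel : ∀ j, ∑ i, r j i • m i = 0 := fun j => by
    rw [← hL]
    have : r j ∈ LinearMap.ker L := hr ▸ Submodule.subset_span ⟨j, rfl⟩
    rw [LinearMap.mem_ker.mp this]; rfl
  obtain ⟨e, he⟩ := mem_pow_of_not_le (SysTriv.ideal r m) (fun q hq hqm hle => by
    obtain ⟨c, hc, hc'⟩ := h q hq hqm _ _ r m hrel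
    exact hc (hle hc')) a ha
  obtain ⟨κ, _, α, y, h1, h2⟩ : SysTriv r (a ^ e • m) := he
  have h1' : ∀ i, a ^ e • m i = ∑ j, α i j • y j := h1
  let E := Fintype.equivFin κ
  let ψ0 : (Fin k → B) →ₗ[B] (Fin (Fintype.card κ) → B) := Fintype.linearCombination B (fun i j => α i (E.symm j))
  have hker : LinearMap.ker L ≤ LinearMap.ker ψ0 := by
    rw [← hr, Submodule.span_le]
    rintro _ ⟨j, rfl⟩
    rw [SetLike.mem_coe, LinearMap.mem_ker]
    ext jj
    simp only [ψ0, Fintype.linearCombination_apply, Finset.sum_apply, Pi.smul_apply, smul_eq_mul]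
    exact h2 j _
  refine ⟨e, Fintype.card κ, (LinearMap.ker L).liftQ ψ0 hker ∘ₗ (L.quotKerEquivOfSurjective hLs).symm.toLinearMap,
    Fintype.linearCombination B (fun j => y (E.symm j)), fun v => ?_⟩
  obtain ⟨c, rfl⟩ := hLs v
  have h3 : (L.quotKerEquivOfSurjective hLs).symm (L c) = Submodule.Quotient.mk c := by
    rw [LinearEquiv.symm_apply_eq]; rfl
  rw [LinearMap.comp_apply, LinearEquiv.coe_coe, h3, Submodule.liftQ_apply, hL]
  simp only [ψ0, Fintype.linearCombination_apply, Finset.sum_apply, Pi.smul_apply, smul_eq_mul, Finset.sum_smul]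
  rw [Finset.sum_comm, Finset.smul_sum]
  refine Finset.sum_congr rfl fun i _ => ?_
  rw [smul_comm, h1', Finset.smul_sum, ← E.symm.sum_comp]
  simp [smul_smul]

theorem SR_of_LFac {B C : Type} [CommRing B] [CommRing C] [IsDomain C] [Algebra B C] [IsNoetherianRing B] [IsLocalRing B]
    [Algebra.IsIntegral B C] (hinj : Function.Injective (algebraMap B C)) (hroots : HasRoots C) (p : ℕ) [hp : Fact p.Prime] [CharP C p]
    (h : ∀ q : Ideal B, q.IsPrime → q ≠ maximalIdeal B → LFac q C)
    {ι : Type} [DecidableEq ι] (x : ι → B) (hxm : ∀ i, x i ∈ maximalIdeal B) (hx : SR B x) : SR C x := by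
  have hx0 : ∀ i, x i ≠ 0 := by
    intro i hi
    obtain ⟨c, hc⟩ := hx ∅ i (by simp) 0 1 ⟨0, by simp [hi]⟩
    simp at hc
  have key : ∀ (n : ℕ) (s : Finset ι), s.card = n → ∀ i, i ∉ s → ∀ (t : ι → ℕ) (m : C),
      InS s (fun l => x l ^ t l) (x i • m) → InS s (fun l => x l ^ t l) m := by
    intro n
    induction n using Nat.strong_induction_on with
    | _ n ih =>
    intro s hsn i hi t u hu
    have ih' : ∀ s' : Finset ι, s'.card < n → ∀ i, i ∉ s' → ∀ (b : ℕ) (t : ι → ℕ) (m : C),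
      InS s' (fun l => x l ^ t l) (x i ^ b • m) → InS s' (fun l => x l ^ t l) m := by
      intro s' hs' i hi b t m hm
      induction b with
      | zero => simpa using hm
      | succ b ihb =>
        apply ihb
        apply ih _ hs' s' rfl i hi
        rwa [smul_smul, ← pow_succ']
    by_cases h0 : ∃ l ∈ s, t l = 0
    · obtain ⟨l, hl, hl0⟩ := h0
      have := InS.single (a := fun l => x l ^ t l) hl u
      simpa [hl0] using this
    push Not at h0
    rcases s.eq_empty_or_nonempty with rfl | hs
    · obtain ⟨c, hc⟩ := hu
      refine ⟨0, ?_⟩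
      rw [Finset.sum_empty] at hc ⊢
      rw [Algebra.smul_def] at hc
      exact (mul_eq_zero.mp hc).resolve_left fun h => hx0 i (hinj (by rw [h, map_zero]))
    refine core_lemma hroots p s hs (fun l => x l ^ t l) (x i) ?_ ?_ ?_ ?_ (factorHyp_of_LFac h _ (hxm i)) ?_ u hu
    · intro l hl h
      rw [map_pow] at h
      exact hx0 l (hinj (by rw [pow_eq_zero_iff (h0 l hl)] at h; rw [h, map_zero]))
    · intro b t' m hm
      simp only [← pow_mul] at hm ⊢
      exact hx.pow s i hi b _ m hm
    · intro j hj b t' m hm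
      simp only [← pow_mul] at hm ⊢
      exact hx.pow _ j (by simp) _ _ m hm
    · intro j hj b t' m hm
      simp only [← pow_mul] at hm ⊢
      exact ih' _ (by rw [← hsn]; exact Finset.card_erase_lt_of_mem hj) j (by simp) _ _ m hm
    · intro l hl
      exact factorHyp_of_LFac h _ (Ideal.pow_mem_of_mem _ (hxm l) _ (Nat.pos_of_ne_zero (h0 l hl)))
  intro s i hi t m hm
  exact key _ s rfl i hi t m hm

theorem local_flat {B C : Type} [CommRing B] [CommRing C] [IsDomain C] [Algebra B C] [IsNoetherianRing B] [IsLocalRing B]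
    [Algebra.IsIntegral B C] (hinj : Function.Injective (algebraMap B C)) (hroots : HasRoots C) (p : ℕ) [hp : Fact p.Prime] [CharP C p]
    (h : ∀ q : Ideal B, q.IsPrime → q ≠ maximalIdeal B → LFac q C) (n : ℕ) (hFD : FD B n C) : Module.Flat B C := by
  obtain ⟨ι, _, _, x, hxm, hx, z, hz, hmz⟩ := exists_max_SR B
  exact flat_of_FD hx z hz hmz n C h (SR_of_LFac hinj hroots p h x hxm hx) hFD

lemma HasRoots.localization {T C : Type} [CommRing T] [CommRing C] [Algebra T C] (S : Submonoid T) [IsLocalization S C]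
    [Nontrivial C] (h : HasRoots T) : HasRoots C := by
  intro f hf hd
  have h1 := IsLocalization.scaleRoots_commonDenom_mem_lifts S f (by rw [hf.leadingCoeff]; exact one_mem _)
  set s := IsLocalization.commonDenom S f.support f.coeff
  obtain ⟨g, hg, hgd, hgm⟩ := Polynomial.lifts_and_natDegree_eq_and_monic h1 ((Polynomial.monic_scaleRoots_iff _).mpr hf)
  obtain ⟨c, hc⟩ := h g hgm (by rw [hgd, Polynomial.natDegree_scaleRoots]; exact hd)
  have hu := IsLocalization.map_units C s
  refine ⟨IsLocalization.mk' C c s, ?_⟩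
  have h2 := Polynomial.scaleRoots_eval_mul f (IsLocalization.mk' C c s) (algebraMap T C s)
  rw [mul_comm (algebraMap T C s), IsLocalization.mk'_spec, ← hg, Polynomial.eval_map_algebraMap, Polynomial.aeval_algebraMap_apply, Polynomial.coe_aeval_eq_eval, hc, map_zero] at h2
  exact (hu.pow _).mul_right_eq_zero.mp h2.symm

section
variable {A T B C : Type} [CommRing A] [CommRing T] [CommRing B] [CommRing C] [Algebra A T] [Algebra A B] [Algebra B C]
  [Algebra A C] [Algebra T C] [IsScalarTower A B C] [IsScalarTower A T C] (S : Submonoid A) [IsLocalization S B]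
  [IsLocalization (Algebra.algebraMapSubmonoid T S) C]

include S in
lemma LFac_up (hTC : Function.Injective (algebraMap T C)) (q : Ideal B) [q.IsPrime] (h : LFac (q.comap (algebraMap A B)) T) :
    LFac q C := by
  intro l k _ _ r m hr
  have : IsLocalizedModule S (IsScalarTower.toAlgHom A T C).toLinearMap := isLocalizedModule_iff_isLocalization.mpr inferInstance
  obtain ⟨s, hs⟩ := IsLocalization.exist_integer_multiples_of_finite S (fun z : l × k => r z.1 z.2)
  obtain ⟨s', hs'⟩ := IsLocalizedModule.exist_integer_multiples_of_finite S (IsScalarTower.toAlgHom A T C).toLinearMap m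
  choose r' hr' using hs
  choose m' hm' using hs'
  have hm'' : ∀ i, algebraMap T C (m' i) = (s' : A) • m i := fun i => hm' i
  have hr'' : ∀ j i, algebraMap A B (r' (j, i)) = (s : A) • r j i := fun j i => hr' (j, i)
  obtain ⟨c, hc, κ, _, a, y, h1, h2⟩ := h l k (fun j i => r' (j, i)) m' (fun j => by
    apply hTC
    rw [map_sum, map_zero]
    have : ∀ i, algebraMap T C (r' (j, i) • m' i) = ((s : A) * s') • (r j i • m i) := fun i => by
      rw [Algebra.smul_def, map_mul, hm'', ← IsScalarTower.algebraMap_apply A T C, IsScalarTower.algebraMap_apply A B C, hr'']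
      simp only [Algebra.smul_def, map_mul]
      rw [← IsScalarTower.algebraMap_apply A B C]; ring
    simp only [this]
    rw [← Finset.smul_sum, hr, smul_zero])
  refine ⟨algebraMap A B (c * s'), ?_, κ, inferInstance, fun i j => algebraMap A B (a i j), fun j => algebraMap T C (y j), fun i => ?_, fun jj j => ?_⟩
  · rw [map_mul]
    intro hmem
    rcases (inferInstance : q.IsPrime).mem_or_mem hmem with h | h
    · exact hc h
    · exact (inferInstance : q.IsPrime).ne_top (Ideal.eq_top_of_isUnit_mem _ h (IsLocalization.map_units B s'))
  · have h3 := congrArg (algebraMap T C) (h1 i)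
    rw [Pi.smul_apply, map_sum, Algebra.smul_def, map_mul, hm''] at h3
    rw [Pi.smul_apply]
    simp only [Algebra.smul_def, map_mul] at h3 ⊢
    simp only [← IsScalarTower.algebraMap_apply] at h3 ⊢
    rw [mul_assoc]; exact h3
  · have h3 := congrArg (algebraMap A B) (h2 jj j)
    simp only [map_sum, map_mul, map_zero, hr'', Algebra.smul_def, mul_assoc] at h3
    rw [← Finset.mul_sum] at h3
    exact (IsLocalization.map_units B s).mul_right_eq_zero.mp h3

lemma LFac_down (P : Ideal A) (hSP : ∀ s ∈ S, s ∉ P) [P.IsPrime] (hTC : Function.Injective (algebraMap T C)) (hAB : Function.Injective (algebraMap A B))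
    [Module.Flat B C] : LFac P T := by
  intro l k _ _ r m hr
  have : IsLocalizedModule S (IsScalarTower.toAlgHom A T C).toLinearMap := isLocalizedModule_iff_isLocalization.mpr inferInstance
  obtain ⟨κ, _, a, y, h1, h2⟩ := SysTriv.of_flat (A := B) (fun j i => algebraMap A B (r j i)) (fun i => algebraMap T C (m i)) (fun j => by
    have h3 := congrArg (algebraMap T C) (hr j)
    rw [map_sum, map_zero] at h3
    rw [← h3]
    refine Finset.sum_congr rfl fun i _ => ?_
    simp only [Algebra.smul_def, map_mul]
    simp only [← IsScalarTower.algebraMap_apply])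
  obtain ⟨s, hs⟩ := IsLocalization.exist_integer_multiples_of_finite S (fun z : k × κ => a z.1 z.2)
  obtain ⟨s', hs'⟩ := IsLocalizedModule.exist_integer_multiples_of_finite S (IsScalarTower.toAlgHom A T C).toLinearMap y
  choose a' ha' using hs
  choose y' hy' using hs'
  have hy'' : ∀ i, algebraMap T C (y' i) = (s' : A) • y i := fun i => hy' i
  have ha'' : ∀ j i, algebraMap A B (a' (j, i)) = (s : A) • a j i := fun j i => ha' (j, i)
  refine ⟨s * s', hSP _ (mul_mem s.2 s'.2), κ, inferInstance, fun i j => a' (i, j), y', fun i => ?_, fun jj j => ?_⟩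
  · apply hTC
    have h3 := h1 i
    simp only at h3
    rw [Pi.smul_apply, Algebra.smul_def, map_mul, h3, map_sum, Finset.mul_sum]
    refine Finset.sum_congr rfl fun j _ => ?_
    rw [Algebra.smul_def (a' (i, j))]
    simp only [map_mul]
    rw [hy'', ← IsScalarTower.algebraMap_apply A T C, ← IsScalarTower.algebraMap_apply A T C, ← IsScalarTower.algebraMap_apply A T C, IsScalarTower.algebraMap_apply A B C (a' (i, j)), ha'']
    simp only [Algebra.smul_def, map_mul]
    rw [← IsScalarTower.algebraMap_apply A B C]; ring
  · apply hAB
    rw [map_sum, map_zero]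
    have h3 := h2 jj j
    simp only [map_mul, ha'', mul_smul_comm]
    rw [← Finset.smul_sum, h3, smul_zero]
end

theorem global_flat {A T : Type} [CommRing A] [CommRing T] [IsDomain A] [IsDomain T] [Algebra A T] [IsNoetherianRing A]
    [Algebra.IsIntegral A T] (hinj : Function.Injective (algebraMap A T)) (hroots : HasRoots T) (p : ℕ) [hp : Fact p.Prime] [CharP T p]
    (n : ℕ) (hFD : FD A n T) : Module.Flat A T := by
  suffices H : ∀ (h : ℕ∞) (P : Ideal A) [P.IsPrime], P.height = h → LFac P T from flat_of_LFac fun q hq => H _ q rfl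
  intro h
  induction h using WellFoundedLT.induction with
  | ind h ih =>
  intro P _ hP
  let B := Localization.AtPrime P
  let C := Localization (Algebra.algebraMapSubmonoid T P.primeCompl)
  letI : Algebra B C := localizationAlgebra P.primeCompl T
  have : IsScalarTower A B C := by
    refine IsScalarTower.of_algebraMap_eq fun a => ?_
    rw [RingHom.algebraMap_toAlgebra, IsLocalization.map_eq, ← IsScalarTower.algebraMap_apply A T C]
  have hS0 : Algebra.algebraMapSubmonoid T P.primeCompl ≤ nonZeroDivisors T := by
    rintro _ ⟨s, hs, rfl⟩
    refine mem_nonZeroDivisors_of_ne_zero fun h0 => hs ?_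
    have : s = 0 := hinj (by rw [map_zero]; exact h0)
    rw [this]; exact P.zero_mem
  have hTC : Function.Injective (algebraMap T C) := IsLocalization.injective C hS0
  have hAB : Function.Injective (algebraMap A B) := IsLocalization.injective B P.primeCompl_le_nonZeroDivisors
  have : IsDomain C := IsLocalization.isDomain_localization hS0
  have : CharP C p := charP_of_injective_algebraMap hTC p
  have hint : Algebra.IsIntegral B C := ⟨isIntegral_localization (M := P.primeCompl)⟩
  have hBC : Function.Injective (algebraMap B C) := by
    rw [injective_iff_map_eq_zero]
    intro b hb
    obtain ⟨a, s, rfl⟩ := IsLocalization.exists_mk'_eq P.primeCompl b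
    rw [IsLocalization.mk'_eq_zero_iff]
    have h1 := congrArg (algebraMap B C) (IsLocalization.mk'_spec B a s)
    rw [map_mul, hb, zero_mul, ← IsScalarTower.algebraMap_apply A B C, IsScalarTower.algebraMap_apply A T C] at h1
    have h2 : a = 0 := hinj (hTC (by rw [← h1, map_zero, map_zero]))
    exact ⟨1, by simp [h2]⟩
  have : IsLocalizedModule P.primeCompl (IsScalarTower.toAlgHom A T C).toLinearMap := isLocalizedModule_iff_isLocalization.mpr inferInstance
  have hFDC : FD B n C := FD.localize P.primeCompl B n T C (IsScalarTower.toAlgHom A T C).toLinearMap hFD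
  have hflat : Module.Flat B C := by
    refine local_flat hBC (hroots.localization (Algebra.algebraMapSubmonoid T P.primeCompl)) p (fun q hq hqm => ?_) n hFDC
    refine LFac_up P.primeCompl hTC q ?_
    have hle : q.comap (algebraMap A B) < P := by
      have h1 : P = (maximalIdeal B).comap (algebraMap A B) := (IsLocalization.AtPrime.under_maximalIdeal B P).symm
      refine lt_of_le_of_ne ?_ fun he => hqm ?_
      · conv_rhs => rw [h1]
        exact Ideal.comap_mono (IsLocalRing.le_maximalIdeal hq.ne_top)
      · have h2 : q.comap (algebraMap A B) = (maximalIdeal B).comap (algebraMap A B) := he.trans h1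
        have e1 := IsLocalization.map_under P.primeCompl B q
        have e2 := IsLocalization.map_under P.primeCompl B (maximalIdeal B)
        rw [← e1, ← e2]; exact congrArg _ h2
    refine ih _ ?_ _ rfl
    have h3 := Ideal.height_add_one_le_of_lt_of_isPrime hle
    rw [hP] at h3
    refine lt_of_lt_of_le ?_ h3
    exact ENat.lt_add_one_iff (Ideal.height_ne_top_of_isPrime) |>.mpr le_rfl
  exact LFac_down (B := B) (C := C) P.primeCompl P (fun s hs => hs) hTC hAB

section
variable {A : Type} [CommRing A]

def WR (x : ℕ → A) (J : ℕ → Ideal A) (j : ℕ) (M : Type) [AddCommGroup M] [Module A M] : Prop :=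
  ∀ i < j, ∀ m : M, x i • m ∈ J i • (⊤ : Submodule A M) → m ∈ J i • (⊤ : Submodule A M)

variable {x : ℕ → A} {J : ℕ → Ideal A}

lemma WR_T (h0 : J 0 = ⊥) (hs : ∀ j, J (j + 1) = J j ⊔ Ideal.span {x j}) {F N : Type} [AddCommGroup F] [Module A F]
    [AddCommGroup N] [Module A N] (g : F →ₗ[A] N) (hg : Function.Surjective g) (j : ℕ) (hN : WR x J j N) (f : F)
    (hf : f ∈ LinearMap.ker g) (hfJ : f ∈ J j • (⊤ : Submodule A F)) : f ∈ J j • LinearMap.ker g := by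
  induction j generalizing f with
  | zero => simp only [h0, Submodule.bot_smul] at *; exact hfJ
  | succ j ih =>
    rw [hs, Submodule.sup_smul] at hfJ ⊢
    obtain ⟨f0, hf0, f1, hf1, rfl⟩ := Submodule.mem_sup.mp hfJ
    rw [Submodule.ideal_span_singleton_smul] at hf1
    obtain ⟨h, -, rfl⟩ := hf1
    change f0 + x j • h ∈ _
    change f0 + x j • h ∈ _ at hf
    have h1 : g h ∈ J j • (⊤ : Submodule A N) := by
      refine hN j (Nat.lt_succ_self j) _ ?_
      have h2 : x j • g h = - g f0 := by
        rw [LinearMap.mem_ker, map_add, map_smul] at hf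
        exact eq_neg_of_add_eq_zero_right hf
      rw [h2]
      refine neg_mem ?_
      have := Submodule.mem_map_of_mem (f := g) hf0
      rw [Submodule.map_smul''] at this
      exact Submodule.smul_mono le_rfl le_top this
    have h3 : g h ∈ (J j • (⊤ : Submodule A F)).map g := by
      rw [Submodule.map_smul'', Submodule.map_top, LinearMap.range_eq_top.mpr hg]; exact h1
    obtain ⟨h0', hh0, hh1⟩ := h3
    have hk : h - h0' ∈ LinearMap.ker g := by rw [LinearMap.mem_ker, map_sub, hh1, sub_self]
    have h4 : f0 + x j • h0' ∈ J j • LinearMap.ker g := by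
      refine ih (fun i hi => hN i (by omega)) _ ?_ (add_mem hf0 (Submodule.smul_mem _ _ hh0))
      have : f0 + x j • h0' = (f0 + x j • h) - x j • (h - h0') := by rw [smul_sub]; abel
      rw [this]; exact sub_mem hf (Submodule.smul_mem _ _ hk)
    have : f0 + x j • h = (f0 + x j • h0') + x j • (h - h0') := by rw [smul_sub]; abel
    rw [this]
    exact Submodule.add_mem_sup h4 (Submodule.smul_mem_smul (Ideal.mem_span_singleton_self _) hk)

lemma mem_smul_top_ker {F N : Type} [AddCommGroup F] [Module A F]
    [AddCommGroup N] [Module A N] (g : F →ₗ[A] N) (I : Ideal A) (k : LinearMap.ker g) :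
    k ∈ I • (⊤ : Submodule A (LinearMap.ker g)) ↔ (k : F) ∈ I • LinearMap.ker g := by
  have : (I • (⊤ : Submodule A (LinearMap.ker g))).map (LinearMap.ker g).subtype = I • LinearMap.ker g := by
    rw [Submodule.map_smul'', Submodule.map_top, Submodule.range_subtype]
  rw [← this]
  exact ⟨fun h => ⟨k, h, rfl⟩, fun ⟨k2, h, h2⟩ => by rwa [← Subtype.ext h2]⟩

lemma WR_S (h0 : J 0 = ⊥) (hs : ∀ j, J (j + 1) = J j ⊔ Ideal.span {x j}) {F N : Type} [AddCommGroup F] [Module A F]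
    [AddCommGroup N] [Module A N] (g : F →ₗ[A] N) (hg : Function.Surjective g) (j : ℕ) (hN : WR x J j N)
    (hF : WR x J (j + 1) F) : WR x J (j + 1) (LinearMap.ker g) := by
  intro i hi k hk
  rw [mem_smul_top_ker] at hk ⊢
  refine WR_T h0 hs g hg i (fun i' hi' => hN i' (by omega)) _ k.2 ?_
  exact hF i hi _ (Submodule.smul_mono le_rfl le_top hk)

lemma WR_flat (j : ℕ) (hA : WR x J j A) (F : Type) [AddCommGroup F] [Module A F] [Module.Flat A F] : WR x J j F := by
  intro i hi f hf
  refine Submodule.smul_mono_left ?_ (flat_colon _ _ _ hf)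
  intro a ha
  rw [Submodule.mem_colon_singleton, smul_eq_mul] at ha
  have := hA i hi a
  simp only [smul_eq_mul, Ideal.mul_top] at this
  exact this (by rwa [mul_comm])

theorem PD_of_WR [IsNoetherianRing A] [IsLocalRing A] (h0 : J 0 = ⊥) (hs : ∀ j, J (j + 1) = J j ⊔ Ideal.span {x j})
    (d : ℕ) (hd : J d = maximalIdeal A) (hA : WR x J d A) (n : ℕ) (hn : n ≤ d) : ∀ (N : Type) [AddCommGroup N] [Module A N]
    [Module.Finite A N], WR x J (d - n) N → PD A n N := by
  induction n with
  | zero =>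
    intro N _ _ _ hN
    change Module.Flat A N
    -- minimal generators
    let b := Module.finBasis (ResidueField A) (ResidueField A ⊗[A] N)
    let k := Module.finrank (ResidueField A) (ResidueField A ⊗[A] N)
    choose v hv using fun i => TensorProduct.mk_surjective A N (ResidueField A) residue_surjective (b i)
    let g : (Fin k → A) →ₗ[A] N := Fintype.linearCombination A v
    have hspan := IsLocalRing.span_eq_top_of_tmul_eq_basis (R := A) v b hv
    have hg : Function.Surjective g := by
      rw [← LinearMap.range_eq_top, Fintype.range_linearCombination, hspan]
    have hker : LinearMap.ker g ≤ maximalIdeal A • (⊤ : Submodule A (Fin k → A)) := by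
      intro f hf
      have h1 : ∀ i, f i ∈ maximalIdeal A := by
        have h2 : ∑ i, residue A (f i) • b i = 0 := by
          have h3 := congrArg (TensorProduct.mk A (ResidueField A) N 1) (LinearMap.mem_ker.mp hf)
          rw [map_zero, Fintype.linearCombination_apply, map_sum] at h3
          rw [← h3]
          refine Finset.sum_congr rfl fun i _ => ?_
          rw [map_smul, hv i]; rfl
        intro i
        have := Fintype.linearIndependent_iff.mp b.linearIndependent _ h2 i
        rwa [residue_eq_zero_iff] at this
      rw [pi_eq_sum_univ f]
      exact Submodule.sum_mem _ fun i _ => Submodule.smul_mem_smul (h1 i) trivial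
    have hbot : LinearMap.ker g = ⊥ := by
      refine Submodule.eq_bot_of_le_smul_of_le_jacobson_bot (maximalIdeal A) _ (IsNoetherian.noetherian _) ?_ (IsLocalRing.maximalIdeal_le_jacobson _)
      intro f hf
      have := WR_T h0 hs g hg d hN f hf (by rw [hd]; exact hker hf)
      rwa [hd] at this
    exact Module.Flat.of_linearEquiv (LinearEquiv.ofBijective g ⟨LinearMap.ker_eq_bot.mp hbot, hg⟩).symm
  | succ n ih =>
    intro N _ _ _ hN
    obtain ⟨k, g, hg⟩ := Module.Finite.exists_fin' A N
    refine ⟨k, g, hg, ih (by omega) _ ?_⟩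
    have h1 : d - n = (d - (n + 1)) + 1 := by omega
    rw [h1]
    exact WR_S h0 hs g hg _ hN (WR_flat _ (fun i hi => hA i (by omega)) _)

theorem FD_of_WR [IsNoetherianRing A] [IsLocalRing A] (h0 : J 0 = ⊥) (hs : ∀ j, J (j + 1) = J j ⊔ Ideal.span {x j})
    (d : ℕ) (hd : J d = maximalIdeal A) (hA : WR x J d A) (M : Type) [AddCommGroup M] [Module A M] : FD A d M :=
  FD.of_PD d (fun I => PD_of_WR h0 hs d hd hA d le_rfl _ (fun i hi => by omega)) M
end

section
variable {k : Type} [Field k] {d : ℕ}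

lemma mvps_mem_span (S : Set (Fin d)) (f : MvPowerSeries (Fin d) k) :
    f ∈ Ideal.span (MvPowerSeries.X '' S) ↔ ∀ e : Fin d →₀ ℕ, (∀ i ∈ S, e i = 0) → MvPowerSeries.coeff e f = 0 := by
  classical
  constructor
  · intro hf
    refine Submodule.span_induction ?_ ?_ ?_ ?_ hf
    · rintro _ ⟨i, hi, rfl⟩ e he
      rw [MvPowerSeries.coeff_X, if_neg]
      rintro rfl
      simpa using he i hi
    · intro e _; simp
    · intro a b _ _ ha hb e he
      rw [map_add, ha e he, hb e he, add_zero]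
    · intro a b _ hb e he
      rw [smul_eq_mul, MvPowerSeries.coeff_mul]
      refine Finset.sum_eq_zero fun z hz => ?_
      rw [hb z.2 (fun i hi => ?_), mul_zero]
      have := Finset.HasAntidiagonal.mem_antidiagonal.mp hz
      have h1 := he i hi
      rw [← this, Finsupp.add_apply] at h1
      omega
  · intro hf
    let φ : (Fin d →₀ ℕ) → Option (Fin d) := fun e => if h : ∃ i ∈ S, e i ≠ 0 then some h.choose else none
    let F : Fin d → MvPowerSeries (Fin d) k := fun i e => if φ e = some i then MvPowerSeries.coeff e f else 0
    have hφ : ∀ e i, φ e = some i → i ∈ S ∧ e i ≠ 0 := by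
      intro e i h
      simp only [φ] at h
      split_ifs at h with h1
      · have := h1.choose_spec
        rw [Option.some.inj h] at this
        exact this
    have hF : f = ∑ i, F i := by
      ext e
      rw [map_sum]
      change _ = ∑ i, (if φ e = some i then MvPowerSeries.coeff e f else 0)
      by_cases h : ∃ i ∈ S, e i ≠ 0
      · have : φ e = some h.choose := dif_pos h
        simp [this]
      · rw [hf e (by push Not at h; exact h)]; simp
    rw [hF]
    refine Ideal.sum_mem _ fun i _ => ?_
    have hdvd : MvPowerSeries.X i ∣ F i := by
      rw [MvPowerSeries.X_dvd_iff]
      intro m hm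
      change (if φ m = some i then MvPowerSeries.coeff m f else 0) = 0
      rw [if_neg]
      intro h
      exact (hφ m i h).2 hm
    by_cases hi : i ∈ S
    · exact Ideal.mem_of_dvd _ hdvd (Ideal.subset_span ⟨i, hi, rfl⟩)
    · have : F i = 0 := by
        ext e
        change (if φ e = some i then MvPowerSeries.coeff e f else 0) = 0
        rw [if_neg]
        intro h
        exact hi (hφ e i h).1
      rw [this]; exact Ideal.zero_mem _

lemma mvps_span_prime (S : Set (Fin d)) : (Ideal.span (MvPowerSeries.X '' S) : Ideal (MvPowerSeries (Fin d) k)).IsPrime := by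
  classical
  have key : ∀ f : MvPowerSeries (Fin d) k, ∃ f' : MvPowerSeries (Fin d) k, f - f' ∈ Ideal.span (MvPowerSeries.X '' S) ∧
      ∀ e : Fin d →₀ ℕ, (∃ i ∈ S, e i ≠ 0) → MvPowerSeries.coeff e f' = 0 := by
    intro f
    let f' : MvPowerSeries (Fin d) k := fun e => if (∃ i ∈ S, e i ≠ 0) then 0 else MvPowerSeries.coeff e f
    have hf' : ∀ e, MvPowerSeries.coeff e f' = if (∃ i ∈ S, e i ≠ 0) then 0 else MvPowerSeries.coeff e f := fun e => rfl
    refine ⟨f', ?_, fun e he => by rw [hf', if_pos he]⟩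
    rw [mvps_mem_span]
    intro e he
    rw [map_sub, hf', if_neg (by push Not; exact he), sub_self]
  refine ⟨?_, ?_⟩
  · rw [Ideal.ne_top_iff_one, mvps_mem_span]
    intro h
    simpa using h 0 (by simp)
  · intro f g hfg
    obtain ⟨f', hf, hf'⟩ := key f
    obtain ⟨g', hg, hg'⟩ := key g
    have h1 : f' * g' ∈ Ideal.span (MvPowerSeries.X '' S) := by
      have : f' * g' = f * g - ((f - f') * g + f' * (g - g')) := by ring
      rw [this]
      exact sub_mem hfg (add_mem (Ideal.mul_mem_right _ _ hf) (Ideal.mul_mem_left _ _ hg))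
    have h2 : f' * g' = 0 := by
      ext e
      by_cases he : ∃ i ∈ S, e i ≠ 0
      · obtain ⟨i, hi, hei⟩ := he
        rw [MvPowerSeries.coeff_mul, map_zero]
        refine Finset.sum_eq_zero fun z hz => ?_
        have := Finset.HasAntidiagonal.mem_antidiagonal.mp hz
        rw [← this, Finsupp.add_apply] at hei
        by_cases hz1 : z.1 i = 0
        · rw [hg' z.2 ⟨i, hi, by omega⟩, mul_zero]
        · rw [hf' z.1 ⟨i, hi, hz1⟩, zero_mul]
      · rw [(mvps_mem_span S _).mp h1 e (by push Not at he; exact he), map_zero]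
    rcases mul_eq_zero.mp h2 with h | h
    · left; rwa [h, sub_zero] at hf
    · right; rwa [h, sub_zero] at hg

lemma mvps_colon (S : Set (Fin d)) (j : Fin d) (hj : j ∉ S) (f : MvPowerSeries (Fin d) k)
    (hf : MvPowerSeries.X j * f ∈ Ideal.span (MvPowerSeries.X '' S)) : f ∈ Ideal.span (MvPowerSeries.X '' S) := by
  rcases (mvps_span_prime S).mem_or_mem hf with h | h
  · exfalso
    rw [mvps_mem_span] at h
    have := h (Finsupp.single j 1) (fun i hi => by
      rw [Finsupp.single_apply, if_neg]; rintro rfl; exact hj hi)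
    rw [MvPowerSeries.coeff_index_single_self_X] at this
    exact one_ne_zero this
  · exact h

theorem mvps_FD (M : Type) [AddCommGroup M] [Module (MvPowerSeries (Fin d) k) M] : FD (MvPowerSeries (Fin d) k) d M := by
  refine FD_of_WR (x := fun i => if h : i < d then MvPowerSeries.X ⟨i, h⟩ else 0)
    (J := fun j => Ideal.span (MvPowerSeries.X '' {i : Fin d | (i : ℕ) < j})) ?_ ?_ d ?_ ?_ M
  · simp
  · intro j
    rw [← Ideal.span_union]
    apply le_antisymm
    · rw [Ideal.span_le]
      rintro _ ⟨i, hi, rfl⟩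
      rcases Nat.lt_succ_iff_lt_or_eq.mp hi with h | h
      · exact Ideal.subset_span (Or.inl ⟨i, h, rfl⟩)
      · refine Ideal.subset_span (Or.inr ?_)
        subst h
        simp
    · rw [Ideal.span_le]
      rintro a (⟨i, hi, rfl⟩ | rfl)
      · exact Ideal.subset_span ⟨i, Nat.lt_succ_of_lt hi, rfl⟩
      · split_ifs with h
        · exact Ideal.subset_span ⟨⟨j, h⟩, Nat.lt_succ_self j, rfl⟩
        · exact Ideal.zero_mem _
  · ext f
    rw [mvps_mem_span, IsLocalRing.mem_maximalIdeal, mem_nonunits_iff, MvPowerSeries.isUnit_iff_constantCoeff, isUnit_iff_ne_zero, not_not]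
    constructor
    · intro h; exact h 0 (by simp)
    · intro h e he
      have : e = 0 := by ext i; exact he i i.2
      rw [this]; exact h
  · intro i hi m hm
    simp only [smul_eq_mul, Ideal.mul_top] at hm ⊢
    rw [dif_pos hi] at hm
    exact mvps_colon _ _ (by simp) _ hm
end

section
variable {k S : Type} [Field k] [CommRing S] [Nontrivial S] (p : ℕ) [hp : Fact p.Prime] [CharP k p] [CharP S p]

lemma section_step (E : Subring (k × S)) (G : Subring (k × S)) (hGE : G ≤ E) (hE : ∀ z ∈ E, z ^ p ∈ G)
    (hE2 : ∀ a : k, ∃ s, (a, s) ∈ E)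
    (hb : ∀ z ∈ G, z.1 = 0 → z = 0) (hmax : ∀ G' : Subring (k × S), G ≤ G' → G' ≤ E → (∀ z ∈ G', z.1 = 0 → z = 0) → G' ≤ G)
    (a : k) : ∃ s, (a, s) ∈ G := by
  by_contra hcon
  obtain ⟨s, hs⟩ := hE2 a
  set z : k × S := (a, s) with hz
  let π : G →+* k := (RingHom.fst k S).comp G.subtype
  have hπ : Function.Injective π := by
    rw [injective_iff_map_eq_zero]
    intro w hw
    exact Subtype.ext (hb w w.2 hw)
  let L : Subfield k := { π.range with
    inv_mem' := by
      intro c hc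
      obtain ⟨w, hw⟩ := hc
      by_cases h0 : c = 0
      · rw [h0, inv_zero]; exact π.range.zero_mem
      obtain ⟨t, ht⟩ := hE2 c⁻¹
      refine ⟨w ^ (p - 1) * ⟨_, hE _ ht⟩, ?_⟩
      rw [map_mul, map_pow, hw]
      change c ^ (p - 1) * (c⁻¹) ^ p = c⁻¹
      have h1 : p = (p - 1) + 1 := (Nat.succ_pred_prime hp.out).symm
      conv_lhs => rw [h1, Nat.add_sub_cancel, pow_succ, ← mul_assoc, ← mul_pow, mul_inv_cancel₀ h0, one_pow, one_mul] }
  let π' : G →+* L := π.codRestrict L fun w => ⟨w, rfl⟩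
  have hπ' : Function.Injective π' := fun u v h => hπ (congrArg Subtype.val h)
  let gp : G := ⟨z ^ p, hE z hs⟩
  let G' := (Algebra.adjoin G {z}).toSubring
  have hGG' : G ≤ G' := fun w hw => (Algebra.adjoin G {z}).algebraMap_mem ⟨w, hw⟩
  have hzG' : z ∈ G' := Algebra.subset_adjoin (Set.mem_singleton z)
  have hpE : ∀ q : Polynomial G, Polynomial.aeval z q ∈ E := by
    intro q
    rw [Polynomial.aeval_eq_sum_range]
    refine E.sum_mem fun i _ => ?_
    rw [Algebra.smul_def]
    exact E.mul_mem (hGE (q.coeff i).2) (E.pow_mem hs i)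
  have hmem : ∀ w ∈ G', ∃ q : Polynomial G, Polynomial.aeval z q = w := by
    intro w hw
    have : w ∈ Algebra.adjoin G {z} := hw
    rw [Algebra.adjoin_singleton_eq_range_aeval] at this
    exact this
  refine hcon ⟨s, hmax G' hGG' ?_ ?_ hzG'⟩
  · intro w hw
    obtain ⟨q, rfl⟩ := hmem w hw
    exact hpE q
  · intro w hw hw1
    obtain ⟨q, rfl⟩ := hmem w hw
    let m : Polynomial G := Polynomial.X ^ p - Polynomial.C gp
    have hm : m.Monic := Polynomial.monic_X_pow_sub_C _ hp.out.ne_zero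
    have hmz : Polynomial.aeval z m = 0 := by
      simp only [m, map_sub, map_pow, Polynomial.aeval_X, Polynomial.aeval_C]
      exact sub_self _
    have hqr : Polynomial.aeval z q = Polynomial.aeval z (q %ₘ m) := by
      conv_lhs => rw [← Polynomial.modByMonic_add_div q m]
      rw [map_add, map_mul, hmz, zero_mul, add_zero]
    rw [hqr] at hw1 ⊢
    set r := q %ₘ m with hr
    have hdeg : r.degree < m.degree := Polynomial.degree_modByMonic_lt _ hm
    have hev : ∀ q : Polynomial G, Polynomial.aeval a (q.map π') = (Polynomial.aeval z q).1 := by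
      intro q
      have h6 : (Polynomial.aeval z q).1 = RingHom.fst k S (Polynomial.eval₂ (algebraMap G (k × S)) z q) := rfl
      rw [h6, Polynomial.hom_eval₂, Polynomial.aeval_def, Polynomial.eval₂_map]
      rfl
    have hr0 : r.map π' = 0 := by
      by_contra hne
      have hirr : Irreducible (Polynomial.X ^ p - Polynomial.C (π' gp)) := by
        refine X_pow_sub_C_irreducible_of_prime hp.out fun b hb' => ?_
        obtain ⟨w, hw⟩ := b.2
        have h1 : (b : k) ^ p = a ^ p := congrArg Subtype.val hb'
        have h2 : (b : k) = a := frobenius_inj k p h1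
        refine hcon ⟨w.1.2, ?_⟩
        have h3 : w.1.1 = a := hw.trans h2
        rw [← h3]; exact w.2
      have hmap : m.map π' = Polynomial.X ^ p - Polynomial.C (π' gp) := by simp [m]
      have hmin := minpoly.eq_of_irreducible_of_monic hirr (x := a) (by rw [← hmap, hev, hmz]; rfl) (hmap ▸ hm.map π')
      have hdvd := minpoly.dvd L a (p := r.map π') (by rw [hev, hw1])
      rw [← hmin, ← hmap] at hdvd
      have h5 := Polynomial.degree_le_of_dvd hdvd hne
      rw [Polynomial.degree_map_eq_of_injective hπ', Polynomial.degree_map_eq_of_injective hπ'] at h5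
      exact absurd hdeg (not_lt.mpr h5)
    have : r = 0 := by
      apply Polynomial.map_injective π' hπ'
      rw [hr0, Polynomial.map_zero]
    rw [this, map_zero]

end

theorem field_formallySmooth (k : Type) [Field k] (p : ℕ) [hp : Fact p.Prime] [CharP k p] [Algebra (ZMod p) k] :
    Algebra.FormallySmooth (ZMod p) k := by
  refine Algebra.FormallySmooth.of_comp_surjective ?_
  intro S _ _ I hI φ
  rcases subsingleton_or_nontrivial S with hS | hS
  · refine ⟨{ toFun := fun _ => 0, map_one' := Subsingleton.elim _ _, map_mul' := fun _ _ => Subsingleton.elim _ _, map_zero' := rfl, map_add' := fun _ _ => Subsingleton.elim _ _, commutes' := fun _ => Subsingleton.elim _ _ }, ?_⟩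
    ext c
    obtain ⟨s, hs⟩ := Ideal.Quotient.mk_surjective (φ c)
    rw [← hs, Subsingleton.elim s 0]; rfl
  have : CharP S p := charP_of_injective_algebraMap (algebraMap (ZMod p) S).injective p
  have : CharP (k × S) p := Prod.charP k S p
  let E : Subring (k × S) := RingHom.eqLocus ((φ : k →+* S ⧸ I).comp (RingHom.fst k S)) ((Ideal.Quotient.mk I).comp (RingHom.snd k S))
  have hEm : ∀ z : k × S, z ∈ E ↔ φ z.1 = Ideal.Quotient.mk I z.2 := fun z => Iff.rfl
  let G0 : Subring (k × S) := E.map (frobenius (k × S) p)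
  let C : Set (Subring (k × S)) := {G | G0 ≤ G ∧ G ≤ E ∧ ∀ z ∈ G, z.1 = 0 → z = 0}
  have hG0 : G0 ∈ C := by
    refine ⟨le_rfl, ?_, ?_⟩
    · rintro _ ⟨z, hz, rfl⟩
      exact E.pow_mem hz p
    · rintro _ ⟨z, hz, rfl⟩ h
      have h1 : z.1 ^ p = 0 := h
      have h2 : z.1 = 0 := pow_eq_zero_iff hp.out.ne_zero |>.mp h1
      have h3 := (hEm z).mp hz
      rw [h2, map_zero, eq_comm, Ideal.Quotient.eq_zero_iff_mem] at h3
      have h4 : z.2 ^ 2 = 0 := by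
        have := Ideal.pow_mem_pow h3 2
        rwa [hI] at this
      have h5 : z.2 ^ p = 0 := pow_eq_zero_of_le hp.out.two_le h4
      exact Prod.ext h1 h5
  obtain ⟨G, -, hG⟩ := zorn_le_nonempty₀ C (by
    intro c hc hchain G1 hG1
    refine ⟨sSup c, ⟨?_, ?_, ?_⟩, fun z hz => le_sSup hz⟩
    · exact (hc hG1).1.trans (le_sSup hG1)
    · exact sSup_le fun z hz => (hc hz).2.1
    · intro z hz
      rw [Subring.mem_sSup_of_directedOn ⟨G1, hG1⟩ hchain.directedOn] at hz
      obtain ⟨G2, hG2, hz⟩ := hz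
      exact (hc hG2).2.2 z hz) G0 hG0
  have hGC := hG.prop
  have hsec := section_step p E G hGC.2.1 (fun z hz => hGC.1 ⟨z, hz, rfl⟩) (fun a => by
      obtain ⟨s, hs⟩ := Ideal.Quotient.mk_surjective (φ a)
      exact ⟨s, hs.symm⟩) hGC.2.2 (fun G' h1 h2 h3 => hG.le_of_ge ⟨hGC.1.trans h1, h2, h3⟩ h1)
  let π : G →+* k := (RingHom.fst k S).comp G.subtype
  have hπ : Function.Bijective π := by
    refine ⟨?_, fun a => ?_⟩
    · rw [injective_iff_map_eq_zero]
      intro w hw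
      exact Subtype.ext (hGC.2.2 w w.2 hw)
    · obtain ⟨s, hs⟩ := hsec a
      exact ⟨⟨_, hs⟩, rfl⟩
  let e := RingEquiv.ofBijective π hπ
  let g : k →+* S := ((RingHom.snd k S).comp G.subtype).comp (e.symm : k →+* G)
  refine ⟨{ g with commutes' := fun r => congrFun (congrArg DFunLike.coe (Subsingleton.elim (g.comp (algebraMap (ZMod p) k)) (algebraMap (ZMod p) S))) r }, ?_⟩
  ext c
  change Ideal.Quotient.mk I (g c) = φ c
  have h1 := (hEm _).mp (hGC.2.1 (e.symm c).2)
  have h2 : (e.symm c : k × S).1 = c := e.apply_symm_apply c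
  rw [h2] at h1
  exact h1.symm

theorem exists_coeff_field (R : Type) [CommRing R] [IsLocalRing R] [IsAdicComplete (maximalIdeal R) R]
    (p : ℕ) [hp : Fact p.Prime] [CharP R p] :
    ∃ σ : ResidueField R →+* R, (residue R).comp σ = RingHom.id _ := by
  letI : Algebra (ZMod p) R := ZMod.algebra R p
  have : CharP (ResidueField R) p := charP_of_injective_algebraMap (algebraMap (ZMod p) (ResidueField R)).injective p
  have := field_formallySmooth (ResidueField R) p
  obtain ⟨g, hg⟩ := Algebra.FormallySmooth.exists_mkₐ_comp_eq_of_isAdicComplete (R := ZMod p) (I := maximalIdeal R) (AlgHom.id (ZMod p) (ResidueField R))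
  refine ⟨g, ?_⟩
  ext c
  exact congrFun (congrArg DFunLike.coe hg) c

lemma pi_mem_smul_top {A : Type} [CommRing A] (I : Ideal A) {n : ℕ} (v : Fin n → A) (h : ∀ i, v i ∈ I) :
    v ∈ I • (⊤ : Submodule A (Fin n → A)) := by
  rw [pi_eq_sum_univ v]
  exact Submodule.sum_mem _ fun i _ => Submodule.smul_mem_smul (h i) trivial

lemma pi_precomplete {A : Type} [CommRing A] (I : Ideal A) [IsPrecomplete I A] (n : ℕ) : IsPrecomplete I (Fin n → A) := by
  refine ⟨fun f hf => ?_⟩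
  have h1 : ∀ i : Fin n, ∃ L : A, ∀ m, f m i ≡ L [SMOD (I ^ m • ⊤ : Submodule A A)] := by
    intro i
    refine IsPrecomplete.prec' (I := I) (fun m => f m i) fun {a b} hab => ?_
    have h2 := SModEq.sub_mem.mp (hf hab)
    have h3 := Submodule.mem_map_of_mem (f := LinearMap.proj (R := A) (φ := fun _ : Fin n => A) i) h2
    rw [Submodule.map_smul''] at h3
    exact SModEq.sub_mem.mpr (Submodule.smul_mono le_rfl le_top h3)
  choose L hL using h1
  refine ⟨L, fun m => SModEq.sub_mem.mpr (pi_mem_smul_top _ _ fun i => ?_)⟩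
  have := SModEq.sub_mem.mp (hL i m)
  rwa [smul_eq_mul, Ideal.mul_top] at this

lemma finite_of_adic {A R : Type} [CommRing A] [CommRing R] [Algebra A R] (I : Ideal A) [IsPrecomplete I A] [IsHausdorff I R]
    (s : Finset R) (hs : ∀ r : R, ∃ r' ∈ Submodule.span A (s : Set R), r - r' ∈ I.map (algebraMap A R)) : Module.Finite A R := by
  obtain ⟨n, w, hw⟩ := Submodule.fg_iff_exists_fin_generating_family.mp (⟨s, rfl⟩ : (Submodule.span A (s : Set R)).FG)
  let g : (Fin n → A) →ₗ[A] R := Fintype.linearCombination A w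
  have := pi_precomplete I n
  refine Module.Finite.of_surjective g (surjective_of_mkQ_comp_surjective (I := I) ?_)
  intro z
  obtain ⟨r, rfl⟩ := Submodule.mkQ_surjective _ z
  obtain ⟨r', hr', hrr⟩ := hs r
  rw [← hw, ← Fintype.range_linearCombination (R := A)] at hr'
  obtain ⟨v, rfl⟩ := hr'
  refine ⟨v, ?_⟩
  rw [LinearMap.comp_apply, ← sub_eq_zero, ← map_sub, Submodule.mkQ_apply, Submodule.Quotient.mk_eq_zero, Ideal.smul_top_eq_map]
  have := neg_mem hrr
  rw [neg_sub] at this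
  exact this

section
variable {k R : Type} [Field k] [CommRing R] [IsLocalRing R] [IsAdicComplete (maximalIdeal R) R] {d : ℕ}

theorem exists_mvps_hom (σ : k →+* R) (x : Fin d → R) (hx : ∀ i, x i ∈ maximalIdeal R) :
    ∃ φ : MvPowerSeries (Fin d) k →+* R, (∀ i, φ (MvPowerSeries.X i) = x i) ∧ ∀ c, φ (MvPowerSeries.C c) = σ c := by
  let ε : MvPolynomial (Fin d) k →+* R := MvPolynomial.eval₂Hom σ x
  have hε : MvPolynomial.idealOfVars (Fin d) k ≤ (maximalIdeal R).comap ε := by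
    rw [MvPolynomial.idealOfVars, Ideal.span_le]
    rintro _ ⟨i, rfl⟩
    change ε _ ∈ maximalIdeal R
    simp only [ε, MvPolynomial.coe_eval₂Hom, MvPolynomial.eval₂_X]
    exact hx i
  have hεn : ∀ n, MvPolynomial.idealOfVars (Fin d) k ^ n ≤ (maximalIdeal R ^ n).comap ε := fun n =>
    (Ideal.pow_right_mono hε n).trans (Ideal.le_comap_pow ε n)
  let f : (n : ℕ) → MvPowerSeries (Fin d) k →+* R ⧸ maximalIdeal R ^ n := fun n =>
    (Ideal.quotientMap (maximalIdeal R ^ n) ε (hεn n)).comp (MvPowerSeries.truncTotalAlgHom (Fin d) k n : MvPowerSeries (Fin d) k →+* _)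
  have hfa : ∀ n a, f n a = Ideal.Quotient.mk (maximalIdeal R ^ n) (ε (MvPowerSeries.truncTotal n a)) := fun n a => rfl
  have hfp : ∀ n (q : MvPolynomial (Fin d) k), f n q = Ideal.Quotient.mk (maximalIdeal R ^ n) (ε q) := by
    intro n q
    have h := (MvPowerSeries.truncTotalAlgHom (Fin d) k n).commutes q
    change Ideal.quotientMap (maximalIdeal R ^ n) ε (hεn n) (MvPowerSeries.truncTotalAlgHom (Fin d) k n (algebraMap (MvPolynomial (Fin d) k) (MvPowerSeries (Fin d) k) q)) = _
    rw [h]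
    rfl
  have hf : ∀ {m n : ℕ} (hle : m ≤ n), (Ideal.Quotient.factorPow (maximalIdeal R) hle).comp (f n) = f m := by
    intro m n hle
    ext a
    rw [RingHom.comp_apply, hfa, hfa]
    change Ideal.Quotient.mk (maximalIdeal R ^ m) _ = _
    rw [Ideal.Quotient.eq, ← map_sub]
    exact hεn m (MvPowerSeries.truncTotal_sub_truncTotal_mem_pow_idealOfVars hle le_rfl _)
  let φ := IsAdicComplete.liftRingHom (maximalIdeal R) f hf
  have hφ : ∀ q : MvPolynomial (Fin d) k, φ q = ε q := by
    intro q
    rw [← sub_eq_zero]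
    refine IsHausdorff.haus (inferInstance : IsHausdorff (maximalIdeal R) R) _ fun n => ?_
    rw [SModEq.zero, smul_eq_mul, Ideal.mul_top, ← Ideal.Quotient.eq_zero_iff_mem, map_sub, sub_eq_zero, IsAdicComplete.mk_liftRingHom, hfp]
  refine ⟨φ, fun i => ?_, fun c => ?_⟩
  · have := hφ (MvPolynomial.X i)
    rw [MvPolynomial.coe_X] at this
    rw [this]; simp [ε]
  · have := hφ (MvPolynomial.C c)
    rw [MvPolynomial.coe_C] at this
    rw [this]; simp [ε]

end

section
variable {R : Type} [CommRing R] [IsLocalRing R] [IsNoetherianRing R]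

/-- finitely many generators modulo powers of the maximal ideal -/
lemma gens_mod_pow {A : Type} [CommRing A] [Algebra A R] (hres : ∀ r : R, ∃ a : A, r - algebraMap A R a ∈ maximalIdeal R) (n : ℕ) :
    ∃ s : Finset R, ∀ r : R, ∃ r' ∈ Submodule.span A (s : Set R), r - r' ∈ maximalIdeal R ^ n := by
  classical
  induction n with
  | zero => exact ⟨∅, fun r => ⟨0, zero_mem _, by simp⟩⟩
  | succ n ih =>
    obtain ⟨s, hs⟩ := ih
    obtain ⟨t, ht⟩ := (inferInstance : IsNoetherianRing R).noetherian (maximalIdeal R ^ n)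
    refine ⟨s ∪ t, fun r => ?_⟩
    obtain ⟨r', hr', hrr⟩ := hs r
    have key : ∀ z ∈ maximalIdeal R ^ n, ∃ z' ∈ Submodule.span A (t : Set R), z - z' ∈ maximalIdeal R ^ (n + 1) := by
      intro z hz
      rw [← ht] at hz
      refine Submodule.span_induction ?_ ?_ ?_ ?_ (p := fun z _ => ∃ z' ∈ Submodule.span A (t : Set R), z - z' ∈ maximalIdeal R ^ (n + 1)) (Submodule.span_induction (p := fun z _ => z ∈ Submodule.span A {w : R | ∃ c : R, ∃ g ∈ t, w = c * g}) ?_ ?_ ?_ ?_ hz)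
      · rintro _ ⟨c, g, hg, rfl⟩
        obtain ⟨a, ha⟩ := hres c
        refine ⟨a • g, Submodule.smul_mem _ _ (Submodule.subset_span hg), ?_⟩
        rw [Algebra.smul_def, ← sub_mul, pow_succ, mul_comm (_ - _) g]
        refine Ideal.mul_mem_mul ?_ ha
        rw [← ht]; exact Submodule.subset_span hg
      · exact ⟨0, zero_mem _, by simp⟩
      · rintro a b _ _ ⟨a', ha, ha'⟩ ⟨b', hb, hb'⟩
        refine ⟨a' + b', add_mem ha hb, ?_⟩
        rw [add_sub_add_comm]; exact add_mem ha' hb'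
      · rintro c a _ ⟨a', ha, ha'⟩
        refine ⟨c • a', Submodule.smul_mem _ _ ha, ?_⟩
        rw [← smul_sub, Algebra.smul_def]; exact Ideal.mul_mem_left _ _ ha'
      · intro g hg; exact Submodule.subset_span ⟨1, g, hg, (one_mul g).symm⟩
      · exact zero_mem _
      · intro a b _ _ ha hb; exact add_mem ha hb
      · intro c a _ ha
        refine Submodule.span_induction ?_ ?_ ?_ ?_ ha
        · rintro _ ⟨c', g, hg, rfl⟩
          exact Submodule.subset_span ⟨c * c', g, hg, by rw [smul_eq_mul, mul_assoc]⟩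
        · simp
        · intro a b _ _ ha hb; rw [smul_add]; exact add_mem ha hb
        · intro e a _ ha; rw [smul_comm]; exact Submodule.smul_mem _ _ ha
    obtain ⟨z', hz', hzz⟩ := key _ hrr
    refine ⟨r' + z', add_mem (Submodule.span_mono (by simp) hr') (Submodule.span_mono (by simp) hz'), ?_⟩
    rwa [← sub_sub]

lemma ringKrullDim_le_of_integral {A B : Type} [CommRing A] [CommRing B] [Algebra A B] [Algebra.IsIntegral A B] :
    ringKrullDim B ≤ ringKrullDim A := by
  refine Order.krullDim_le_of_strictMono (fun q => PrimeSpectrum.comap (algebraMap A B) q) fun q q' h => ?_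
  exact Ideal.IsIntegral.comap_lt_comap (R := A) h

lemma mvps_dim_le (k : Type) [Field k] (d : ℕ) : ringKrullDim (MvPowerSeries (Fin d) k) ≤ d := by
  rw [← IsLocalRing.maximalIdeal_height_eq_ringKrullDim]
  have h1 : (Ideal.span (MvPowerSeries.X '' (Set.univ : Set (Fin d))) : Ideal (MvPowerSeries (Fin d) k)) = maximalIdeal _ := by
    ext f
    rw [mvps_mem_span, IsLocalRing.mem_maximalIdeal, mem_nonunits_iff, MvPowerSeries.isUnit_iff_constantCoeff, isUnit_iff_ne_zero, not_not]
    constructor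
    · intro h; exact h 0 (by simp)
    · intro h e he
      have : e = 0 := by ext i; exact he i trivial
      rw [this]; exact h
  have h2 := Ideal.height_le_card_of_mem_minimalPrimes_span (p := maximalIdeal (MvPowerSeries (Fin d) k)) (s := MvPowerSeries.X '' (Set.univ : Set (Fin d))) (Set.toFinite _) (by
    rw [h1, Ideal.minimalPrimes_eq_subsingleton_self]; rfl)
  have h3 : (MvPowerSeries.X '' (Set.univ : Set (Fin d)) : Set (MvPowerSeries (Fin d) k)).ncard ≤ d := by
    refine (Set.ncard_image_le Set.finite_univ).trans ?_
    rw [Set.ncard_univ, Nat.card_fin]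
  have h4 : (maximalIdeal (MvPowerSeries (Fin d) k)).height ≤ (d : ℕ∞) := h2.trans (by exact_mod_cast h3)
  exact_mod_cast h4

theorem cohen [IsDomain R] [IsAdicComplete (maximalIdeal R) R] (p : ℕ) [Fact p.Prime] [CharP R p] (d : ℕ) (x : Fin d → R)
    (hdim : ringKrullDim R = d) (hrad : (Ideal.span (Set.range x)).radical = maximalIdeal R) :
    ∃ (k : Type) (_ : Field k) (φ : MvPowerSeries (Fin d) k →+* R), (∀ i, φ (MvPowerSeries.X i) = x i) ∧ φ.IsIntegral ∧
      Function.Injective φ := by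
  obtain ⟨σ, hσ⟩ := exists_coeff_field R p
  have hxm : ∀ i, x i ∈ maximalIdeal R := fun i => by
    rw [← hrad]; exact Ideal.le_radical (Ideal.subset_span ⟨i, rfl⟩)
  obtain ⟨φ, hφ, hφc⟩ := exists_mvps_hom σ x hxm
  letI : Algebra (MvPowerSeries (Fin d) (ResidueField R)) R := φ.toAlgebra
  let I : Ideal (MvPowerSeries (Fin d) (ResidueField R)) := Ideal.span (Set.range MvPowerSeries.X)
  have hI : I.map φ = Ideal.span (Set.range x) := by
    rw [Ideal.map_span, ← Set.range_comp]
    congr 2; ext i; exact hφ i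
  obtain ⟨n, hn⟩ := Ideal.exists_radical_pow_le_of_fg (Ideal.span (Set.range x)) ((inferInstance : IsNoetherianRing R).noetherian _)
  rw [hrad] at hn
  obtain ⟨s, hs⟩ := gens_mod_pow (A := MvPowerSeries (Fin d) (ResidueField R)) (R := R) (fun r => by
    refine ⟨MvPowerSeries.C (residue R r), ?_⟩
    change r - φ _ ∈ maximalIdeal R
    rw [hφc, ← residue_eq_zero_iff, map_sub, sub_eq_zero]
    exact (congrFun (congrArg DFunLike.coe hσ) (residue R r)).symm) n
  have hH : IsHausdorff I R := by
    refine IsHausdorff.map_algebraMap_iff.mp (?_ : IsHausdorff (I.map φ) R)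
    rw [hI]
    refine IsHausdorff.of_isLocalRing _ R ?_
    intro h
    rw [h, Ideal.radical_top] at hrad
    exact (maximalIdeal.isMaximal R).ne_top hrad.symm
  have hfin : Module.Finite (MvPowerSeries (Fin d) (ResidueField R)) R := by
    refine finite_of_adic I s fun r => ?_
    obtain ⟨r', h1, h2⟩ := hs r
    refine ⟨r', h1, ?_⟩
    change r - r' ∈ I.map φ
    rw [hI]; exact hn h2
  have hint : φ.IsIntegral := fun r => Algebra.IsIntegral.isIntegral (R := MvPowerSeries (Fin d) (ResidueField R)) r
  refine ⟨_, inferInstance, φ, hφ, hint, ?_⟩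
  by_contra hinj
  rw [injective_iff_map_eq_zero] at hinj
  push Not at hinj
  obtain ⟨a, ha, ha0⟩ := hinj
  have h1 := ringKrullDim_succ_le_of_surjective φ.rangeRestrict φ.rangeRestrict_surjective (mem_nonZeroDivisors_of_ne_zero ha0) (Subtype.ext ha)
  have : Algebra.IsIntegral φ.range R := ⟨fun r => by
    obtain ⟨q, hq, hq0⟩ := hint r
    refine ⟨q.map φ.rangeRestrict, hq.map _, ?_⟩
    rw [Polynomial.eval₂_map]; exact hq0⟩
  have h2 := ringKrullDim_le_of_integral (A := φ.range) (B := R)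
  rw [hdim] at h2
  have h3 : (d : WithBot ℕ∞) + 1 ≤ d := (add_le_add_left h2 1).trans (h1.trans (mvps_dim_le _ d))
  have h4 : d + 1 ≤ d := by exact_mod_cast h3
  omega
end

section
variable {A T : Type} [CommRing A] [CommRing T] [Algebra A T]

lemma aeval_split (P : Ideal A) (y : T) (e : ℕ) : ∀ g : Polynomial A, (∀ i < e, g.coeff i ∈ P) →
    ∃ w : T, Polynomial.aeval y g - y ^ e * (algebraMap A T (g.coeff e) + y * w) ∈ P.map (algebraMap A T) := by
  induction e with
  | zero =>
    intro g _
    refine ⟨Polynomial.aeval y g.divX, ?_⟩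
    have h1 : Polynomial.aeval y g = Polynomial.aeval y g.divX * y + algebraMap A T (g.coeff 0) := by
      conv_lhs => rw [← Polynomial.divX_mul_X_add g]
      simp
    have : Polynomial.aeval y g - y ^ 0 * (algebraMap A T (g.coeff 0) + y * Polynomial.aeval y g.divX) = 0 := by
      rw [h1]; ring
    rw [this]; exact Ideal.zero_mem _
  | succ e ih =>
    intro g hg
    obtain ⟨w, hw⟩ := ih g.divX (fun i hi => by rw [Polynomial.coeff_divX]; exact hg _ (by omega))
    refine ⟨w, ?_⟩
    rw [Polynomial.coeff_divX] at hw
    have h1 : Polynomial.aeval y g = Polynomial.aeval y g.divX * y + algebraMap A T (g.coeff 0) := by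
      conv_lhs => rw [← Polynomial.divX_mul_X_add g]
      simp
    have h2 : Polynomial.aeval y g - y ^ (e + 1) * (algebraMap A T (g.coeff (e + 1)) + y * w) =
        (Polynomial.aeval y g.divX - y ^ e * (algebraMap A T (g.coeff (e + 1)) + y * w)) * y + algebraMap A T (g.coeff 0) := by
      rw [h1]; ring
    rw [h2]
    exact add_mem (Ideal.mul_mem_right _ _ hw) (Ideal.mem_map_of_mem _ (hg 0 (by omega)))

lemma flat_colon_map [Module.Flat A T] (I : Ideal A) (a : A) (h : ∀ b, a * b ∈ I → b ∈ I) (t : T)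
    (ht : algebraMap A T a * t ∈ I.map (algebraMap A T)) : t ∈ I.map (algebraMap A T) := by
  have h1 : a • t ∈ I • (⊤ : Submodule A T) := by
    rw [Ideal.smul_top_eq_map, Algebra.smul_def]; exact ht
  have h2 := flat_colon _ _ _ h1
  have h3 : t ∈ I • (⊤ : Submodule A T) := by
    refine Submodule.smul_mono_left ?_ h2
    intro b hb
    rw [Submodule.mem_colon_singleton, smul_eq_mul] at hb
    exact h b (by rwa [mul_comm])
  rw [Ideal.smul_top_eq_map] at h3
  exact h3

theorem final_alg [Module.Flat A T] (I P : Ideal A) (a : A) (hPI : P = I ⊔ Ideal.span {a}) (hP : P.IsPrime)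
    (hcol : ∀ b, a * b ∈ I → b ∈ I) (y : T) (hy : IsIntegral A y) :
    ∃ e : ℕ, ∀ N, e ≤ N → ∀ u : T, algebraMap A T a * u ∈ I.map (algebraMap A T) ⊔ Ideal.span {y ^ N} →
      u ∈ I.map (algebraMap A T) ⊔ Ideal.span {y ^ (N - e)} := by
  classical
  obtain ⟨g, hgm, hg⟩ := hy
  have hex : ∃ e, g.coeff e ∉ P := ⟨g.natDegree, by
    rw [hgm.coeff_natDegree]; exact fun h => hP.ne_top ((Ideal.eq_top_iff_one _).mpr h)⟩
  set e := Nat.find hex with he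
  have he1 : g.coeff e ∉ P := Nat.find_spec hex
  obtain ⟨w, hw⟩ := aeval_split (T := T) P y e g (fun i hi => by
    have := Nat.find_min hex hi
    rwa [not_not] at this)
  have hg' : Polynomial.aeval y g = 0 := hg
  rw [hg', zero_sub, neg_mem_iff] at hw
  have hstep : ∀ m t, y ^ (e + m) * t ∈ P.map (algebraMap A T) → y ^ e * t ∈ P.map (algebraMap A T) := by
    intro m
    induction m with
    | zero => intro t h; exact h
    | succ m ih =>
      intro t h
      apply ih
      refine flat_colon_map P (g.coeff e) (fun b hb => (hP.mem_or_mem hb).resolve_left he1) _ ?_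
      have : algebraMap A T (g.coeff e) * (y ^ (e + m) * t) =
          (y ^ e * (algebraMap A T (g.coeff e) + y * w)) * (y ^ m * t) - w * (y ^ (e + (m + 1)) * t) := by ring
      rw [this]
      exact sub_mem (Ideal.mul_mem_right _ _ hw) (Ideal.mul_mem_left _ _ h)
  have hPT : P.map (algebraMap A T) = I.map (algebraMap A T) ⊔ Ideal.span {algebraMap A T a} := by
    rw [hPI, Ideal.map_sup, Ideal.map_span, Set.image_singleton]
  refine ⟨e, fun N hN u hu => ?_⟩
  obtain ⟨s, hs, v, hv, hsv⟩ := Submodule.mem_sup.mp hu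
  obtain ⟨c, rfl⟩ := Ideal.mem_span_singleton.mp hv
  have h1 : y ^ (e + (N - e)) * c ∈ P.map (algebraMap A T) := by
    have : y ^ (e + (N - e)) * c = algebraMap A T a * u - s := by
      rw [← hsv, Nat.add_sub_cancel' hN]; ring
    rw [this, hPT]
    exact sub_mem (Ideal.mem_sup_right (Ideal.mem_span_singleton.mpr (dvd_mul_right _ _))) (Ideal.mem_sup_left hs)
  have h2 := hstep _ _ h1
  rw [hPT] at h2
  obtain ⟨s', hs', v', hv', hsv'⟩ := Submodule.mem_sup.mp h2
  obtain ⟨u', rfl⟩ := Ideal.mem_span_singleton.mp hv'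
  have h3 : u - y ^ (N - e) * u' ∈ I.map (algebraMap A T) := by
    refine flat_colon_map I a hcol _ ?_
    have : algebraMap A T a * (u - y ^ (N - e) * u') = s + y ^ (N - e) * s' := by
      have h4 : y ^ N = y ^ (N - e) * y ^ e := by rw [← pow_add, Nat.sub_add_cancel hN]
      have h5 : algebraMap A T a * u = s + y ^ (N - e) * (y ^ e * c) := by rw [← hsv, h4]; ring
      rw [mul_sub, h5, ← hsv']; ring
    rw [this]
    exact add_mem hs (Ideal.mul_mem_left _ _ hs')
  have : u = (u - y ^ (N - e) * u') + y ^ (N - e) * u' := by ring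
  rw [this]
  exact Submodule.add_mem_sup h3 (Ideal.mem_span_singleton.mpr (dvd_mul_right _ _))
end

lemma RPlus_hasRoots (R : Type) [CommRing R] [IsDomain R] : HasRoots (RPlus R) := by
  intro f hf hdeg
  let K := AlgebraicClosure (FractionRing R)
  have hinj : Function.Injective (algebraMap (RPlus R) K) := Subtype.val_injective
  obtain ⟨c, hc⟩ := IsAlgClosed.exists_root (f.map (algebraMap (RPlus R) K)) (by
    rw [Polynomial.degree_map_eq_of_injective hinj]
    exact (Polynomial.natDegree_pos_iff_degree_pos.mp hdeg).ne')
  have hcT : IsIntegral (RPlus R) c := ⟨f, hf, by rw [← Polynomial.eval_map]; exact hc⟩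
  have hcR : IsIntegral R c := isIntegral_trans c hcT
  refine ⟨⟨c, hcR⟩, hinj ?_⟩
  rw [map_zero, ← Polynomial.eval₂_at_apply, ← Polynomial.eval_map]
  exact hc

/-- For a `d`-dimensional complete local domain `R` of characteristic `p` with
system of parameters `x₁, …, x_d` and `y ∈ R`, there is `N₀ ≥ 1` such that for all `N ≥ N₀`,
`(x₁, …, xₙ, y^N)R⁺ : x_{n+1} ⊆ (x₁, …, xₙ, y^{N-N₀})R⁺`. -/
theorem stmt19 (R : Type) [CommRing R] [IsDomain R] [IsNoetherianRing R] [IsLocalRing R]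
    [IsAdicComplete (maximalIdeal R) R]
    (p : ℕ) [Fact p.Prime] [CharP R p]
    (d : ℕ) (x : Fin d → R) (hx : IsSOP R x)
    (n : ℕ) (hn1 : 1 ≤ n) (hnd : n ≤ d - 1) (y : R) :
    ∃ N₀ : ℕ, 0 < N₀ ∧ ∀ N : ℕ, N₀ ≤ N → ∀ u : RPlus R,
      algebraMap R (RPlus R) (x ⟨n, by omega⟩) * u ∈
          Ideal.span (⇑(algebraMap R (RPlus R)) '' (x '' {i | (i : ℕ) < n})) ⊔
            Ideal.span {algebraMap R (RPlus R) y ^ N} →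
        u ∈ Ideal.span (⇑(algebraMap R (RPlus R)) '' (x '' {i | (i : ℕ) < n})) ⊔
          Ideal.span {algebraMap R (RPlus R) y ^ (N - N₀)} := by
  obtain ⟨k, _, φ, hφx, hφint, hφinj⟩ := cohen p d x hx.1 hx.2
  letI : Algebra (MvPowerSeries (Fin d) k) (RPlus R) := ((algebraMap R (RPlus R)).comp φ).toAlgebra
  have hmap : ∀ a, algebraMap (MvPowerSeries (Fin d) k) (RPlus R) a = algebraMap R (RPlus R) (φ a) := fun _ => rfl
  have hRT : Function.Injective (algebraMap R (RPlus R)) := by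
    intro a b h
    have h2 : algebraMap R (AlgebraicClosure (FractionRing R)) a = algebraMap R (AlgebraicClosure (FractionRing R)) b :=
      congrArg Subtype.val h
    rw [IsScalarTower.algebraMap_apply R (FractionRing R) (AlgebraicClosure (FractionRing R)),
      IsScalarTower.algebraMap_apply R (FractionRing R) (AlgebraicClosure (FractionRing R))] at h2
    exact IsFractionRing.injective R (FractionRing R) ((algebraMap (FractionRing R) _).injective h2)
  have hint : Algebra.IsIntegral (MvPowerSeries (Fin d) k) (RPlus R) :=
    ⟨RingHom.IsIntegral.trans φ (algebraMap R (RPlus R)) hφint (fun t => Algebra.IsIntegral.isIntegral (R := R) t)⟩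
  have hch : CharP (RPlus R) p := charP_of_injective_algebraMap hRT p
  have hdomA : IsDomain (MvPowerSeries (Fin d) k) := NoZeroDivisors.to_isDomain _
  have hflat : Module.Flat (MvPowerSeries (Fin d) k) (RPlus R) :=
    global_flat (hRT.comp hφinj) (RPlus_hasRoots R) p d (mvps_FD _)
  have hnd' : n < d := by omega
  obtain ⟨e, he⟩ := final_alg (A := MvPowerSeries (Fin d) k) (T := RPlus R)
    (Ideal.span (MvPowerSeries.X '' {i : Fin d | (i : ℕ) < n}))
    (Ideal.span (MvPowerSeries.X '' (insert ⟨n, hnd'⟩ {i : Fin d | (i : ℕ) < n})))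
    (MvPowerSeries.X ⟨n, hnd'⟩) (by rw [Set.image_insert_eq, Ideal.span_insert, sup_comm]) (mvps_span_prime _)
    (fun b hb => mvps_colon _ _ (by simp) _ hb) (algebraMap R (RPlus R) y) (Algebra.IsIntegral.isIntegral _)
  have hI : (Ideal.span (MvPowerSeries.X '' {i : Fin d | (i : ℕ) < n})).map (algebraMap (MvPowerSeries (Fin d) k) (RPlus R)) =
      Ideal.span (⇑(algebraMap R (RPlus R)) '' (x '' {i | (i : ℕ) < n})) := by
    rw [Ideal.map_span, Set.image_image, Set.image_image]
    simp only [hmap, hφx]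
  rw [hI, hmap, hφx] at he
  refine ⟨e + 1, Nat.succ_pos e, fun N hN u hu => ?_⟩
  have hle : (Ideal.span {algebraMap R (RPlus R) y ^ (N - e)} : Ideal (RPlus R)) ≤
      Ideal.span {algebraMap R (RPlus R) y ^ (N - (e + 1))} := by
    rw [Ideal.span_singleton_le_span_singleton]
    exact pow_dvd_pow _ (by omega)
  have hle2 := sup_le_sup_left hle (Ideal.span (⇑(algebraMap R (RPlus R)) '' (x '' {i | (i : ℕ) < n})))
  exact hle2 (he N (by omega) u hu)
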